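/- arXiv:1603.04542 — 3 statements merged into one kernel-verified Lean document; each statement's English description precedes it below -/
import Mathlib

section
/- Suppose there exists ε > 0 such that for every n ≥ 1, Σ_{j=0}^{n-1} r(j)² ≤ n^{1-ε}. Then the polynomial variation Q_{f_q,n}(Z) converges to λ_{f_q}(Z) = E[f_q(Z_0)] almost surely as n → ∞. -/
open MeasureTheory ProbabilityTheory Filter
open scoped NNReal ENNReal

noncomputable section

variable {Ω : Type*} [MeasureSpace Ω]

/-- `Z` is a centered stationary Gaussian sequence with covariance `r`. -/
def IsCSG (Z : ℤ → Ω → ℝ) (r : ℤ → ℝ) : Prop :=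
  (∀ k, Measurable (Z k)) ∧
  (∀ (s : Finset ℤ) (a : ℤ → ℝ), ∃ v : ℝ≥0,
    Measure.map (fun ω => ∑ k ∈ s, a k * Z k ω) (ℙ : Measure Ω) = gaussianReal 0 v) ∧
  (∀ j k : ℤ, ∫ ω, Z j ω * Z k ω = r (k - j)) ∧
  0 < r 0

/-- `m`-th probabilists' Hermite polynomial, as a function on `ℝ`. -/
def hermiteFun (m : ℕ) (x : ℝ) : ℝ := Polynomial.aeval x (Polynomial.hermite m)

/-- The polynomial `f_q(x) = ∑_{k=0}^{q/2} d_{2k} He_{2k}(x/√r0)`. -/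
def fpoly (r0 : ℝ) (d : ℕ → ℝ) (q : ℕ) (x : ℝ) : ℝ :=
  ∑ k ∈ Finset.range (q / 2 + 1), d (2 * k) * hermiteFun (2 * k) (x / Real.sqrt r0)

/-- Polynomial variation `Q_{f,n}(X)`. -/
def Qvar (f : ℝ → ℝ) (X : ℤ → Ω → ℝ) (n : ℕ) (ω : Ω) : ℝ :=
  (1 / (n : ℝ)) * ∑ i ∈ Finset.range n, f (X (i : ℤ) ω)

/-- `λ_f(X) = E[f(X_0)]`. -/
def lamE (f : ℝ → ℝ) (X : ℤ → Ω → ℝ) : ℝ := ∫ ω, f (X 0 ω)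

/-- `U_{f,n}(X) = √n (Q_{f,n}(X) − λ_f(X))`. -/
def Ustat (f : ℝ → ℝ) (X : ℤ → Ω → ℝ) (n : ℕ) (ω : Ω) : ℝ :=
  Real.sqrt n * (Qvar f X n ω - lamE f X)

/-- Variance of `U_{f,n}(X)`. -/
def varU (f : ℝ → ℝ) (X : ℤ → Ω → ℝ) (n : ℕ) : ℝ := ∫ ω, (Ustat f X n ω) ^ 2

/-- Standardized statistic `F_{f,n}(X)`. -/
def Fstat (f : ℝ → ℝ) (X : ℤ → Ω → ℝ) (n : ℕ) (ω : Ω) : ℝ :=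
  Ustat f X n ω / Real.sqrt (varU f X n)

/-- fourth cumulant `κ₄(X) = E[X⁴] − 3 (E[X²])²` of a centered random variable. -/
def kappa4 (X : Ω → ℝ) : ℝ := (∫ ω, X ω ^ 4) - 3 * (∫ ω, X ω ^ 2) ^ 2

/-- third cumulant `κ₃(X) = E[X³]`. -/
def kappa3 (X : Ω → ℝ) : ℝ := ∫ ω, X ω ^ 3

/-- `u_{f_q}(Z) = ∑_{k=1}^{q/2} d_{2k}² (2k)! ∑_{j∈ℤ} (r(j)/r(0))^{2k}`. -/
def ufq (r : ℤ → ℝ) (d : ℕ → ℝ) (q : ℕ) : ℝ :=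
  ∑ k ∈ Finset.Icc 1 (q / 2),
    (d (2 * k)) ^ 2 * (Nat.factorial (2 * k)) * ∑' j : ℤ, (r j / r 0) ^ (2 * k)

/-- Total variation distance between two laws on `ℝ`. -/
def dTV (μ ν : Measure ℝ) : ℝ :=
  ⨆ A : {A : Set ℝ // MeasurableSet A}, |(μ A.1).toReal - (ν A.1).toReal|

/-- Wasserstein distance between two laws on `ℝ`. -/
def dW (μ ν : Measure ℝ) : ℝ :=
  ⨆ f : {f : ℝ → ℝ // LipschitzWith 1 f}, |(∫ x, f.1 x ∂μ) - ∫ x, f.1 x ∂ν|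

/-- The quadratic function `f₂(x) = x²`. -/
def f2 : ℝ → ℝ := fun x => x ^ 2

/-- `U_{f₂,n}(X) = √n (Q_{f₂,n}(X) − r(0))`, quadratic case. -/
def U2 (X : ℤ → Ω → ℝ) (r0 : ℝ) (n : ℕ) (ω : Ω) : ℝ :=
  Real.sqrt n * (Qvar f2 X n ω - r0)

/-- Variance of `U_{f₂,n}`. -/
def varU2 (X : ℤ → Ω → ℝ) (r0 : ℝ) (n : ℕ) : ℝ := ∫ ω, (U2 X r0 n ω) ^ 2

/-- Standardized quadratic statistic `F_{f₂,n}`. -/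
def F2stat (X : ℤ → Ω → ℝ) (r0 : ℝ) (n : ℕ) (ω : Ω) : ℝ :=
  U2 X r0 n ω / Real.sqrt (varU2 X r0 n)

/-- `p`-th order finite difference of a sequence of processes. -/
def fdiff : ℕ → (ℤ → Ω → ℝ) → (ℤ → Ω → ℝ)
  | 0, Z => Z
  | (p + 1), Z => fun k ω => fdiff p Z (k + 1) ω - fdiff p Z k ω

/-- The `k`-th moment of the centered Gaussian law of variance `v`. -/
def gaussianMoment (v : ℝ≥0) (k : ℕ) : ℝ := ∫ x, x ^ k ∂gaussianReal 0 v

lemma integrable_pow_gaussianReal (v : ℝ≥0) (k : ℕ) :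
    Integrable (fun x : ℝ => x ^ k) (gaussianReal 0 v) :=
  ((memLp_id_gaussianReal (k : ℝ≥0)).integrable_norm_pow').mono (by fun_prop) (by simp)

lemma gaussianMoment_sq_mul (c : ℝ) (v : ℝ≥0) (k : ℕ) :
    gaussianMoment (.mk (c ^ 2) (sq_nonneg _) * v) k = c ^ k * gaussianMoment v k := by
  have h := gaussianReal_map_const_mul (μ := 0) (v := v) c
  rw [mul_zero] at h
  rw [gaussianMoment, ← h, integral_map (by fun_prop) (by fun_prop)]
  simp_rw [mul_pow]
  rw [integral_const_mul, gaussianMoment]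

lemma gaussianMoment_of_odd (v : ℝ≥0) {k : ℕ} (hk : Odd k) : gaussianMoment v k = 0 := by
  have h := gaussianReal_map_neg (μ := 0) (v := v)
  rw [neg_zero] at h
  have h2 : gaussianMoment v k = -gaussianMoment v k := by
    conv_lhs => rw [gaussianMoment, ← h, integral_map (by fun_prop) (by fun_prop)]
    simp_rw [hk.neg_pow]
    rw [integral_neg, gaussianMoment]
  linarith

lemma gaussianMoment_nonneg (v : ℝ≥0) {k : ℕ} (hk : Even k) : 0 ≤ gaussianMoment v k :=
  integral_nonneg fun _ => hk.pow_nonneg _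

lemma gaussianMoment_mono {v s : ℝ≥0} (hvs : v ≤ s) {k : ℕ} (hk : Even k) :
    gaussianMoment v k ≤ gaussianMoment s k := by
  rcases eq_or_ne s 0 with rfl | hs
  · rw [le_antisymm hvs (zero_le)]
  have hs' : (0 : ℝ) < s := by positivity
  have hle : (v : ℝ) / s ≤ 1 := (div_le_one hs').2 (by exact_mod_cast hvs)
  have hv : v = .mk (Real.sqrt (v / s) ^ 2) (sq_nonneg _) * s := by
    apply NNReal.coe_injective
    push_cast
    rw [Real.sq_sqrt (by positivity)]
    field_simp
  rw [hv, gaussianMoment_sq_mul]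
  exact mul_le_of_le_one_left (gaussianMoment_nonneg s hk)
    (pow_le_one₀ (Real.sqrt_nonneg _) (Real.sqrt_le_one.2 hle))

section

variable {α : Type*} [MeasurableSpace α] {μ : Measure α}

lemma integral_pow_of_map_eq_gaussianReal {X : α → ℝ} (hX : Measurable X) {v : ℝ≥0}
    (h : μ.map X = gaussianReal 0 v) (k : ℕ) : ∫ ω, X ω ^ k ∂μ = gaussianMoment v k := by
  rw [gaussianMoment, ← h, integral_map hX.aemeasurable (by fun_prop)]

lemma integrable_pow_of_map_eq_gaussianReal {X : α → ℝ} (hX : Measurable X) {v : ℝ≥0}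
    (h : μ.map X = gaussianReal 0 v) (k : ℕ) : Integrable (fun ω => X ω ^ k) μ := by
  have := integrable_pow_gaussianReal v k
  rw [← h] at this
  exact this.comp_measurable hX

lemma integral_even_pow_mul_even_pow_le (s : ℝ≥0) (m : ℕ) :
    ∃ C : ℝ, 0 ≤ C ∧ ∀ (v : ℝ≥0) (c : ℝ) (X W : α → ℝ), v ≤ s → |c| ≤ 1 → Measurable X →
      Measurable W → μ.map X = gaussianReal 0 s → μ.map W = gaussianReal 0 v → IndepFun X W μ →
      ∫ ω, X ω ^ (2 * m) * (c * X ω + W ω) ^ (2 * m) ∂μ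
        ≤ gaussianMoment s (2 * m) ^ 2 + C * c ^ 2 := by
  refine ⟨∑ j ∈ Finset.range (2 * m + 1), |gaussianMoment s (2 * m + j) *
    gaussianMoment s (2 * m - j) * (2 * m).choose j|, by positivity, ?_⟩
  intro v c X W hvs hc hX hW hXs hWv hind
  have hexp : ∀ ω, X ω ^ (2 * m) * (c * X ω + W ω) ^ (2 * m) =
      ∑ j ∈ Finset.range (2 * m + 1),
        (c ^ j * (2 * m).choose j) * (X ω ^ (2 * m + j) * W ω ^ (2 * m - j)) := by
    intro ω
    rw [add_pow, Finset.mul_sum]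
    refine Finset.sum_congr rfl fun j _ => ?_
    rw [mul_pow, pow_add]
    ring
  have hindp : ∀ a b : ℕ, IndepFun (fun ω => X ω ^ a) (fun ω => W ω ^ b) μ := fun a b =>
    hind.comp (φ := fun x : ℝ => x ^ a) (ψ := fun x : ℝ => x ^ b) (by fun_prop) (by fun_prop)
  simp_rw [hexp]
  rw [integral_finsetSum]
  swap
  · intro j _
    exact ((hindp _ _).integrable_mul (integrable_pow_of_map_eq_gaussianReal hX hXs _)
      (integrable_pow_of_map_eq_gaussianReal hW hWv _)).const_mul _
  have hterm : ∀ j, ∫ ω, (c ^ j * (2 * m).choose j) * (X ω ^ (2 * m + j) * W ω ^ (2 * m - j)) ∂μ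
      = (c ^ j * (2 * m).choose j) * (gaussianMoment s (2 * m + j) *
        gaussianMoment v (2 * m - j)) := by
    intro j
    rw [integral_const_mul, (hindp _ _).integral_fun_mul_eq_mul_integral (by fun_prop)
      (by fun_prop), integral_pow_of_map_eq_gaussianReal hX hXs,
      integral_pow_of_map_eq_gaussianReal hW hWv]
  simp_rw [hterm]
  have hm : Even (2 * m) := even_two_mul m
  have hbd : ∀ j ∈ Finset.range (2 * m + 1),
      (c ^ j * (2 * m).choose j) * (gaussianMoment s (2 * m + j) * gaussianMoment v (2 * m - j))
      ≤ (if j = 0 then gaussianMoment s (2 * m) ^ 2 else 0) + |gaussianMoment s (2 * m + j) *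
        gaussianMoment s (2 * m - j) * (2 * m).choose j| * c ^ 2 := by
    intro j hj
    rcases Nat.even_or_odd j with hje | hjo
    · have h1 := gaussianMoment_nonneg s (hm.add hje)
      have hsub : Even (2 * m - j) := hm.tsub hje
      have h2 := gaussianMoment_nonneg v hsub
      have h3 := gaussianMoment_mono hvs hsub
      by_cases hj0 : j = 0
      · subst hj0
        simp only [pow_zero, Nat.choose_zero_right, Nat.cast_one, add_zero, Nat.sub_zero,
          if_true, mul_one, one_mul, sq] at *
        have := mul_le_mul_of_nonneg_left h3 h1
        have h4 : 0 ≤ |gaussianMoment s (2 * m) * gaussianMoment s (2 * m)| * (c * c) :=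
          mul_nonneg (abs_nonneg _) (mul_self_nonneg c)
        linarith
      · rw [if_neg hj0, zero_add, abs_of_nonneg (by have := h2.trans h3; positivity)]
        have hcj : c ^ j ≤ c ^ 2 := by
          rw [← hje.pow_abs, ← sq_abs]
          exact pow_le_pow_of_le_one (abs_nonneg _) hc (by obtain ⟨a, ha⟩ := hje; omega)
        have hcj0 := hje.pow_nonneg c
        calc _ ≤ (c ^ 2 * (2 * m).choose j) *
              (gaussianMoment s (2 * m + j) * gaussianMoment s (2 * m - j)) := by gcongr
          _ = _ := by ring
    · rw [gaussianMoment_of_odd s (hm.add_odd hjo), if_neg (by rintro rfl; simp at hjo)]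
      simp
  refine (Finset.sum_le_sum hbd).trans_eq ?_
  rw [Finset.sum_add_distrib, ← Finset.sum_mul]
  simp

end

lemma gaussianMoment_two (v : ℝ≥0) : gaussianMoment v 2 = v := by
  rw [← variance_id_gaussianReal (μ := 0) (v := v), variance_eq_integral (by fun_prop)]
  simp [gaussianMoment, integral_id_gaussianReal]

namespace IsCSG

variable {Z : ℤ → Ω → ℝ} {r : ℤ → ℝ}

lemma exists_map_linearCombination (hZ : IsCSG Z r) (i j : ℤ) (a b : ℝ) :
    ∃ v : ℝ≥0, (ℙ : Measure Ω).map (fun ω => a * Z i ω + b * Z j ω) = gaussianReal 0 v := by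
  obtain ⟨v, hv⟩ := hZ.2.1 {i, j} (Pi.single i a + Pi.single j b)
  refine ⟨v, hv ▸ congrArg (fun f => Measure.map f ℙ) ?_⟩
  funext ω
  simp [Pi.single_apply, add_mul, Finset.sum_add_distrib]

lemma map_eq_gaussianReal (hZ : IsCSG Z r) (k : ℤ) :
    (ℙ : Measure Ω).map (Z k) = gaussianReal 0 (r 0).toNNReal := by
  obtain ⟨v, hv⟩ := hZ.exists_map_linearCombination k k 1 0
  simp only [one_mul, zero_mul, add_zero] at hv
  have hv' : (ℙ : Measure Ω).map (Z k) = gaussianReal 0 v := hv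
  have h := hZ.2.2.1 k k
  simp_rw [← sq, sub_self] at h
  rw [integral_pow_of_map_eq_gaussianReal (hZ.1 k) hv', gaussianMoment_two] at h
  rw [hv', ← h, Real.toNNReal_coe]

lemma integral_pow (hZ : IsCSG Z r) (k : ℤ) (m : ℕ) :
    ∫ ω, Z k ω ^ m = gaussianMoment (r 0).toNNReal m :=
  integral_pow_of_map_eq_gaussianReal (hZ.1 k) (hZ.map_eq_gaussianReal k) m

lemma integrable_pow (hZ : IsCSG Z r) (k : ℤ) (m : ℕ) :
    Integrable (fun ω => Z k ω ^ m) (ℙ : Measure Ω) :=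
  integrable_pow_of_map_eq_gaussianReal (hZ.1 k) (hZ.map_eq_gaussianReal k) m

lemma memLp_two_pow (hZ : IsCSG Z r) (k : ℤ) (m : ℕ) :
    MemLp (fun ω => Z k ω ^ m) 2 (ℙ : Measure Ω) := by
  rw [memLp_two_iff_integrable_sq (((hZ.1 k).pow_const m).aestronglyMeasurable)]
  simp_rw [← pow_mul]
  exact hZ.integrable_pow k (m * 2)

lemma integrable_mul (hZ : IsCSG Z r) (i j : ℤ) (m : ℕ) :
    Integrable (fun ω => Z i ω ^ m * Z j ω ^ m) (ℙ : Measure Ω) :=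
  (hZ.memLp_two_pow i m).integrable_mul (hZ.memLp_two_pow j m)

lemma hasGaussianLaw_prodMk_sub (hZ : IsCSG Z r) (i j : ℤ) (c : ℝ) :
    HasGaussianLaw (fun ω => (Z i ω, Z j ω - c * Z i ω)) (ℙ : Measure Ω) := by
  have hi := hZ.1 i
  have hj := hZ.1 j
  refine ⟨isGaussian_of_map_eq_gaussianReal fun L => ?_⟩
  obtain ⟨v, hv⟩ := hZ.exists_map_linearCombination i j (L (1, 0) - c * L (0, 1)) (L (0, 1))
  refine ⟨0, v, ?_⟩
  rw [Measure.map_map (by fun_prop) (by fun_prop), ← hv]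
  congr 1
  funext ω
  have : (Z i ω, Z j ω - c * Z i ω) =
      Z i ω • ((1, 0) : ℝ × ℝ) + (Z j ω - c * Z i ω) • ((0, 1) : ℝ × ℝ) := by simp
  rw [Function.comp_apply, this, map_add, map_smul, map_smul, smul_eq_mul, smul_eq_mul]
  ring

lemma apply_neg (hZ : IsCSG Z r) (k : ℤ) : r (-k) = r k := by
  have h1 := hZ.2.2.1 0 k
  have h2 := hZ.2.2.1 k 0
  simp_rw [mul_comm (Z k _)] at h2
  rw [h1] at h2
  simpa using h2.symm

lemma sum_sq_le (hZ : IsCSG Z r) (n i : ℕ) (hi : i < n) :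
    ∑ j ∈ Finset.range n, r ((j : ℤ) - i) ^ 2 ≤ 2 * ∑ j ∈ Finset.range n, r j ^ 2 := by
  have h1 : ∑ j ∈ Finset.range i, r ((j : ℤ) - i) ^ 2 ≤ ∑ j ∈ Finset.range n, r j ^ 2 := by
    have hn : Finset.range (i + 1) ⊆ Finset.range n := Finset.range_subset_range.2 hi
    refine le_trans ?_ (Finset.sum_le_sum_of_subset_of_nonneg hn fun _ _ _ => sq_nonneg _)
    rw [Finset.sum_range_succ', ← Finset.sum_range_reflect]
    refine le_add_of_le_of_nonneg (Finset.sum_le_sum fun k hk => ?_) (sq_nonneg _)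
    have hk := Finset.mem_range.1 hk
    rw [← hZ.apply_neg]
    refine le_of_eq ?_
    congr 2
    push_cast [show 1 ≤ i by omega, show k ≤ i - 1 by omega]
    lia
  have h2 : ∑ j ∈ Finset.range (n - i), r (((i + j : ℕ) : ℤ) - i) ^ 2
      ≤ ∑ j ∈ Finset.range n, r j ^ 2 := by
    simp only [Nat.cast_add, add_sub_cancel_left]
    exact Finset.sum_le_sum_of_subset_of_nonneg (Finset.range_subset_range.2 (Nat.sub_le n i))
      fun _ _ _ => sq_nonneg _
  have h3 : n = i + (n - i) := by omega
  conv_lhs => rw [h3, Finset.sum_range_add]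
  linarith

variable [IsProbabilityMeasure (ℙ : Measure Ω)]

lemma integral_even_pow_mul_even_pow_le (hZ : IsCSG Z r) (m : ℕ) :
    ∃ C : ℝ, 0 ≤ C ∧ ∀ i j : ℤ, ∫ ω, Z i ω ^ (2 * m) * Z j ω ^ (2 * m)
      ≤ gaussianMoment (r 0).toNNReal (2 * m) ^ 2 + C * r (j - i) ^ 2 := by
  obtain ⟨C, hC, hbound⟩ :=
    _root_.integral_even_pow_mul_even_pow_le (μ := (ℙ : Measure Ω)) (r 0).toNNReal m
  have hr := hZ.2.2.2
  refine ⟨C / r 0 ^ 2, by positivity, fun i j => ?_⟩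
  set c := r (j - i) / r 0 with hc
  have hi := hZ.1 i
  have hj := hZ.1 j
  have hWm : Measurable fun ω => Z j ω - c * Z i ω := by fun_prop
  obtain ⟨v, hv⟩ := hZ.exists_map_linearCombination i j (-c) 1
  have hW : (ℙ : Measure Ω).map (fun ω => Z j ω - c * Z i ω) = gaussianReal 0 v := by
    rw [← hv]
    congr 1
    funext ω
    ring
  have hij : Integrable (fun ω => Z i ω * Z j ω) (ℙ : Measure Ω) := by
    simpa using hZ.integrable_mul i j 1
  have hii := hZ.integrable_pow i 2
  have hjj := hZ.integrable_pow j 2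
  have hEij : ∫ ω, Z i ω * Z j ω = c * r 0 := by
    rw [hZ.2.2.1, hc, div_mul_cancel₀ _ hr.ne']
  have hE2 : ∀ k, ∫ ω, Z k ω ^ 2 = r 0 := fun k => by
    simpa [← sq] using hZ.2.2.1 k k
  have hvar : (v : ℝ) = r 0 * (1 - c ^ 2) := by
    rw [← gaussianMoment_two, ← integral_pow_of_map_eq_gaussianReal hWm hW]
    have : ∀ ω, (Z j ω - c * Z i ω) ^ 2 =
        Z j ω ^ 2 - 2 * c * (Z i ω * Z j ω) + c ^ 2 * Z i ω ^ 2 := fun ω => by ring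
    simp_rw [this]
    have hsub : Integrable (fun ω => Z j ω ^ 2 - 2 * c * (Z i ω * Z j ω)) (ℙ : Measure Ω) :=
      hjj.sub (hij.const_mul _)
    rw [integral_add hsub (hii.const_mul _),
      integral_sub hjj (hij.const_mul _), integral_const_mul, integral_const_mul, hE2, hE2, hEij]
    ring
  have hc1 : c ^ 2 ≤ 1 := by
    by_contra! h
    have : r 0 * (1 - c ^ 2) < 0 := mul_neg_of_pos_of_neg hr (by linarith)
    rw [← hvar] at this
    exact absurd v.2 (not_le.2 this)
  have hvs : v ≤ (r 0).toNNReal := by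
    rw [← NNReal.coe_le_coe, Real.coe_toNNReal _ hr.le, hvar]
    nlinarith [sq_nonneg c, mul_nonneg hr.le (sq_nonneg c)]
  have hmean : ∫ ω, Z i ω = 0 := by
    simpa [gaussianMoment_of_odd _ odd_one] using hZ.integral_pow i 1
  have hcov : cov[Z i, fun ω => Z j ω - c * Z i ω; ℙ] = 0 := by
    have hi2 : MemLp (Z i) 2 (ℙ : Measure Ω) := by simpa using hZ.memLp_two_pow i 1
    have hj2 : MemLp (Z j) 2 (ℙ : Measure Ω) := by simpa using hZ.memLp_two_pow j 1
    have hW2 : MemLp (fun ω => Z j ω - c * Z i ω) 2 (ℙ : Measure Ω) := hj2.sub (hi2.const_mul c)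
    rw [covariance_eq_sub hi2 hW2, hmean, zero_mul, sub_zero]
    have : ∀ ω, Z i ω * (Z j ω - c * Z i ω) = Z i ω * Z j ω - c * Z i ω ^ 2 := fun ω => by ring
    simp only [Pi.mul_apply, this]
    rw [integral_sub hij (hii.const_mul _), integral_const_mul, hEij, hE2, sub_self]
  have hind := (hZ.hasGaussianLaw_prodMk_sub i j c).indepFun_of_covariance_eq_zero hcov
  have := hbound v c (Z i) _ hvs ((sq_le_one_iff_abs_le_one c).1 hc1) hi hWm
    (hZ.map_eq_gaussianReal i) hW hind
  simp only [add_sub_cancel] at this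
  refine this.trans_eq ?_
  rw [hc, div_pow]
  ring
lemma integral_sq_sum_even_pow_sub_le (hZ : IsCSG Z r) (m : ℕ) :
    ∃ C : ℝ, 0 ≤ C ∧ ∀ n : ℕ,
      ∫ ω, (∑ i ∈ Finset.range n,
        (Z i ω ^ (2 * m) - gaussianMoment (r 0).toNNReal (2 * m))) ^ 2
      ≤ C * n * ∑ j ∈ Finset.range n, r j ^ 2 := by
  obtain ⟨C, hC, hcov⟩ := hZ.integral_even_pow_mul_even_pow_le m
  refine ⟨C * 2, by positivity, fun n => ?_⟩
  set M := gaussianMoment (r 0).toNNReal (2 * m) with hM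
  have hL2 : ∀ i : ℤ, MemLp (fun ω => Z i ω ^ (2 * m) - M) 2 (ℙ : Measure Ω) := fun i =>
    (hZ.memLp_two_pow i (2 * m)).sub (memLp_const M)
  have hint : ∀ i j : ℤ, Integrable
      (fun ω => (Z i ω ^ (2 * m) - M) * (Z j ω ^ (2 * m) - M)) (ℙ : Measure Ω) := fun i j =>
    (hL2 i).integrable_mul (hL2 j)
  have hterm : ∀ i j : ℤ,
      ∫ ω, (Z i ω ^ (2 * m) - M) * (Z j ω ^ (2 * m) - M) ≤ C * r (j - i) ^ 2 := by
    intro i j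
    have hexp : ∀ ω, (Z i ω ^ (2 * m) - M) * (Z j ω ^ (2 * m) - M) =
        Z i ω ^ (2 * m) * Z j ω ^ (2 * m) - (M * Z i ω ^ (2 * m) + M * (Z j ω ^ (2 * m) - M)) :=
      fun ω => by ring
    have h1 := (hZ.integrable_pow i (2 * m)).const_mul M
    have h2 : Integrable (fun ω => M * (Z j ω ^ (2 * m) - M)) (ℙ : Measure Ω) :=
      ((hZ.integrable_pow j (2 * m)).sub (integrable_const M)).const_mul M
    have h12 : Integrable (fun ω => M * Z i ω ^ (2 * m) + M * (Z j ω ^ (2 * m) - M))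
        (ℙ : Measure Ω) := h1.add h2
    simp_rw [hexp]
    rw [integral_sub (hZ.integrable_mul i j _) h12, integral_add h1 h2,
      integral_const_mul, integral_const_mul,
      integral_sub (hZ.integrable_pow j (2 * m)) (integrable_const M),
      hZ.integral_pow, hZ.integral_pow, ← hM]
    have := hcov i j
    simp only [integral_const, probReal_univ, smul_eq_mul, one_mul, sub_self, mul_zero, add_zero]
    linarith
  simp_rw [sq (∑ i ∈ Finset.range n, _), Finset.sum_mul_sum]
  rw [integral_finsetSum _ fun (i : ℕ) _ => integrable_finsetSum _ fun (j : ℕ) _ => hint i j]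
  calc _ ≤ ∑ i ∈ Finset.range n, C * (2 * ∑ j ∈ Finset.range n, r j ^ 2) := by
        refine Finset.sum_le_sum fun i hi => ?_
        rw [integral_finsetSum _ fun (j : ℕ) _ => hint i j]
        refine (Finset.sum_le_sum fun (j : ℕ) _ => hterm i j).trans ?_
        rw [← Finset.mul_sum]
        exact mul_le_mul_of_nonneg_left (hZ.sum_sq_le n i (Finset.mem_range.1 hi)) hC
    _ = _ := by
        rw [Finset.sum_const, Finset.card_range, nsmul_eq_mul]
        ring

end IsCSG

section

variable {α : Type*} [MeasurableSpace α] {μ : Measure α}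

lemma ae_tendsto_zero_of_summable_integral {g : ℕ → α → ℝ} (hg : ∀ n, Integrable (g n) μ)
    (hg0 : ∀ n a, 0 ≤ g n a) (hsum : Summable fun n => ∫ a, g n a ∂μ) :
    ∀ᵐ a ∂μ, Tendsto (fun n => g n a) atTop (nhds 0) := by
  have hmeas : ∀ n, AEMeasurable (fun a => ENNReal.ofReal (g n a)) μ := fun n =>
    (hg n).aemeasurable.ennreal_ofReal
  have hfin : ∫⁻ a, ∑' n, ENNReal.ofReal (g n a) ∂μ ≠ ∞ := by
    rw [lintegral_tsum hmeas]
    simp_rw [← fun n => ofReal_integral_eq_lintegral_ofReal (hg n) (ae_of_all _ (hg0 n))]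
    exact hsum.tsum_ofReal_ne_top
  filter_upwards [ae_lt_top' (AEMeasurable.tsum hmeas) hfin] with a ha
  have h := ENNReal.tendsto_atTop_zero_of_tsum_ne_top ha.ne
  have h' := (ENNReal.tendsto_toReal ENNReal.zero_ne_top).comp h
  simpa [Function.comp_def, ENNReal.toReal_ofReal (hg0 _ a)] using h'

lemma summable_natFloor_pow_rpow_neg {c ε : ℝ} (hc : 1 < c) (hε : 0 < ε) :
    Summable fun n : ℕ => (⌊c ^ n⌋₊ : ℝ) ^ (-ε) := by
  have hc0 : 0 < c := by linarith
  have h1 : 0 < 1 - c⁻¹ := sub_pos.2 (inv_lt_one_of_one_lt₀ hc)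
  have hgeom : Summable fun n : ℕ => (1 - c⁻¹) ^ (-ε) * (c ^ (-ε)) ^ n :=
    (summable_geometric_of_lt_one (by positivity)
      (Real.rpow_lt_one_of_one_lt_of_neg hc (by linarith))).mul_left _
  refine hgeom.of_nonneg_of_le (fun n => by positivity) fun n => ?_
  calc (⌊c ^ n⌋₊ : ℝ) ^ (-ε) ≤ ((1 - c⁻¹) * c ^ n) ^ (-ε) :=
        Real.rpow_le_rpow_of_nonpos (by positivity) (mul_pow_le_nat_floor_pow hc n) (by linarith)
    _ = _ := by
        rw [Real.mul_rpow h1.le (by positivity), ← Real.rpow_natCast_mul hc0.le,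
          ← Real.rpow_mul_natCast hc0.le, mul_comm (n : ℝ)]

lemma ae_tendsto_div_of_monotone_of_integral_sq_le {T : ℕ → α → ℝ} {M K ε : ℝ}
    (hmono : ∀ a, Monotone fun n => T n a)
    (hint : ∀ n, Integrable (fun a => (T n a / n - M) ^ 2) μ) (hε : 0 < ε)
    (hbound : ∀ n : ℕ, 1 ≤ n → ∫ a, (T n a / n - M) ^ 2 ∂μ ≤ K * (n : ℝ) ^ (-ε)) :
    ∀ᵐ a ∂μ, Tendsto (fun n : ℕ => T n a / n) atTop (nhds M) := by
  have hsub : ∀ c : ℝ, 1 < c →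
      ∀ᵐ a ∂μ, Tendsto (fun n : ℕ => T ⌊c ^ n⌋₊ a / ⌊c ^ n⌋₊) atTop (nhds M) := by
    intro c hc
    have hsum : Summable fun n : ℕ => ∫ a, (T ⌊c ^ n⌋₊ a / ⌊c ^ n⌋₊ - M) ^ 2 ∂μ :=
      ((summable_natFloor_pow_rpow_neg hc hε).mul_left K).of_nonneg_of_le
        (fun n => integral_nonneg fun a => sq_nonneg _)
        fun n => hbound _ (Nat.one_le_floor_iff _ |>.2 (one_le_pow₀ hc.le))
    filter_upwards [ae_tendsto_zero_of_summable_integral (fun n => hint ⌊c ^ n⌋₊)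
      (fun n a => sq_nonneg _) hsum] with a ha
    have h := (Real.continuous_sqrt.tendsto 0).comp ha
    simp only [Function.comp_def, Real.sqrt_sq_eq_abs, Real.sqrt_zero] at h
    exact tendsto_sub_nhds_zero_iff.1 ((tendsto_zero_iff_abs_tendsto_zero _).2 h)
  have hone : ∀ k : ℕ, (1 : ℝ) < 1 + 1 / ((k : ℝ) + 1) := fun k =>
    lt_add_of_pos_right _ (by positivity)
  filter_upwards [ae_all_iff.2 fun k => hsub _ (hone k)] with a ha
  refine tendsto_div_of_monotone_of_tendsto_div_floor_pow _ M (hmono a) _ hone ?_ ha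
  simpa using (tendsto_one_div_add_atTop_nhds_zero_nat (𝕜 := ℝ)).const_add 1

end

lemma IsCSG.ae_tendsto_average_even_pow [IsProbabilityMeasure (ℙ : Measure Ω)]
    {Z : ℤ → Ω → ℝ} {r : ℤ → ℝ} (hZ : IsCSG Z r) {ε : ℝ} (hε : 0 < ε)
    (hbound : ∀ n : ℕ, 1 ≤ n → ∑ j ∈ Finset.range n, r j ^ 2 ≤ (n : ℝ) ^ (1 - ε)) (m : ℕ) :
    ∀ᵐ ω ∂(ℙ : Measure Ω), Tendsto
      (fun n : ℕ => (∑ i ∈ Finset.range n, Z i ω ^ (2 * m)) / n) atTop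
      (nhds (gaussianMoment (r 0).toNNReal (2 * m))) := by
  obtain ⟨C, hC, hsq⟩ := hZ.integral_sq_sum_even_pow_sub_le m
  refine ae_tendsto_div_of_monotone_of_integral_sq_le (K := C) (fun ω => ?_) (fun n => ?_) hε
    fun n hn => ?_
  · exact monotone_nat_of_le_succ fun n => by
      rw [Finset.sum_range_succ]
      exact le_add_of_nonneg_right ((even_two_mul m).pow_nonneg _)
  · have hL2 : MemLp (fun ω => (∑ i ∈ Finset.range n, Z i ω ^ (2 * m)) * (n : ℝ)⁻¹ -
        gaussianMoment (r 0).toNNReal (2 * m)) 2 (ℙ : Measure Ω) :=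
      ((memLp_finsetSum _ fun (i : ℕ) _ => hZ.memLp_two_pow i (2 * m)).mul_const _).sub
        (memLp_const _)
    exact hL2.integrable_sq
  · have hn0 : (0 : ℝ) < n := by exact_mod_cast hn
    have hexp : ∀ ω, ((∑ i ∈ Finset.range n, Z i ω ^ (2 * m)) / n -
        gaussianMoment (r 0).toNNReal (2 * m)) ^ 2 = ((n : ℝ) ^ 2)⁻¹ *
        (∑ i ∈ Finset.range n,
          (Z i ω ^ (2 * m) - gaussianMoment (r 0).toNNReal (2 * m))) ^ 2 := by
      intro ω
      rw [Finset.sum_sub_distrib, Finset.sum_const, Finset.card_range, nsmul_eq_mul]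
      field_simp
    simp_rw [hexp]
    rw [integral_const_mul]
    calc _ ≤ ((n : ℝ) ^ 2)⁻¹ * (C * n * (n : ℝ) ^ (1 - ε)) := by
          gcongr
          exact (hsq n).trans (by gcongr; exact hbound n hn)
      _ = _ := by
          rw [sub_eq_add_neg, Real.rpow_add hn0, Real.rpow_one]
          field_simp

lemma fpoly_eq_sum_pow (r0 : ℝ) (d : ℕ → ℝ) (q : ℕ) (x : ℝ) :
    fpoly r0 d q x = ∑ k ∈ Finset.range (q / 2 + 1), ∑ i ∈ Finset.range (2 * k + 1),
      d (2 * k) * (Polynomial.hermite (2 * k)).coeff i / Real.sqrt r0 ^ i * x ^ i := by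
  refine Finset.sum_congr rfl fun k _ => ?_
  rw [hermiteFun, Polynomial.aeval_eq_sum_range, Polynomial.natDegree_hermite, Finset.mul_sum]
  refine Finset.sum_congr rfl fun i _ => ?_
  rw [zsmul_eq_mul, div_pow]
  ring

/-- strong consistency of the polynomial variation under the
summability condition `∑_{j<n} r(j)² ≤ n^{1-ε}`. -/
theorem statement_0
    {Ω : Type*} [MeasureSpace Ω] [IsProbabilityMeasure (ℙ : Measure Ω)]
    (Z : ℤ → Ω → ℝ) (r : ℤ → ℝ) (hZ : IsCSG Z r)
    (q : ℕ) (hq : 0 < q) (hqe : q % 2 = 0)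
    (d : ℕ → ℝ) (hd : d q = r 0 ^ (q / 2))
    (ε : ℝ) (hε : 0 < ε)
    (hbound : ∀ n : ℕ, 1 ≤ n → ∑ j ∈ Finset.range n, (r j) ^ 2 ≤ (n : ℝ) ^ ((1 : ℝ) - ε)) :
    ∀ᵐ ω ∂(ℙ : Measure Ω),
      Filter.Tendsto (fun n : ℕ => Qvar (fpoly (r 0) d q) Z n ω) Filter.atTop
        (nhds (lamE (fpoly (r 0) d q) Z)) := by
  have hae := ae_all_iff.2 fun m => hZ.ae_tendsto_average_even_pow hε hbound m
  set a : ℕ → ℕ → ℝ := fun k i =>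
    d (2 * k) * (Polynomial.hermite (2 * k)).coeff i / Real.sqrt (r 0) ^ i with ha
  have hlam : lamE (fpoly (r 0) d q) Z = ∑ k ∈ Finset.range (q / 2 + 1),
      ∑ i ∈ Finset.range (2 * k + 1), a k i * gaussianMoment (r 0).toNNReal i := by
    have hint : ∀ k i, Integrable (fun ω => a k i * Z 0 ω ^ i) (ℙ : Measure Ω) := fun k i =>
      (hZ.integrable_pow 0 i).const_mul _
    simp_rw [lamE, fpoly_eq_sum_pow]
    rw [integral_finsetSum _ fun k _ => integrable_finsetSum _ fun i _ => hint k i]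
    refine Finset.sum_congr rfl fun k _ => ?_
    rw [integral_finsetSum _ fun i _ => hint k i]
    refine Finset.sum_congr rfl fun i _ => ?_
    rw [integral_const_mul, hZ.integral_pow]
  have hQ : ∀ n ω, Qvar (fpoly (r 0) d q) Z n ω = ∑ k ∈ Finset.range (q / 2 + 1),
      ∑ i ∈ Finset.range (2 * k + 1),
        a k i * ((∑ l ∈ Finset.range n, Z (l : ℤ) ω ^ i) / n) := by
    intro n ω
    simp_rw [Qvar, fpoly_eq_sum_pow]
    rw [Finset.sum_comm, Finset.mul_sum]
    refine Finset.sum_congr rfl fun k _ => ?_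
    rw [Finset.sum_comm, Finset.mul_sum]
    refine Finset.sum_congr rfl fun i _ => ?_
    rw [← Finset.mul_sum]
    ring
  filter_upwards [hae] with ω hω
  simp_rw [hQ, hlam]
  refine tendsto_finsetSum _ fun k _ => tendsto_finsetSum _ fun i _ => ?_
  rcases Nat.even_or_odd' i with ⟨m, rfl | rfl⟩
  · exact (hω m).const_mul _
  · have hodd : a k (2 * m + 1) = 0 := by
      rw [ha]
      simp [Polynomial.coeff_hermite_of_odd_add ((even_two_mul k).add_odd (odd_two_mul_add_one m))]
    simp [hodd]

end
end

section
/- Assume Σ_{j∈ℤ} r(j)² < ∞. Then for each k ∈ {1,…,q/2} the series Σ_{j∈ℤ} (r(j)/r(0))^{2k} converges, and lim_{n→∞} E[U_{f_q,n}(Z)²] = u_{f_q}(Z) := Σ_{k=1}^{q/2} d_{2k}² (2k)! Σ_{j∈ℤ} (r(j)/r(0))^{2k} < ∞. -/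
open MeasureTheory ProbabilityTheory Filter
open scoped NNReal ENNReal

noncomputable section

variable {Ω : Type*} [MeasureSpace Ω]

theorem derivative_hermite_succ (n : ℕ) :
    Polynomial.derivative (Polynomial.hermite (n + 1)) =
      ((n : Polynomial ℤ) + 1) * Polynomial.hermite n := by
  induction n with
  | zero => simp
  | succ n ih =>
    rw [Polynomial.hermite_succ (n + 1), Polynomial.derivative_sub, Polynomial.derivative_mul, ih,
      Polynomial.hermite_succ n]
    simp
    ring

/-- The `m`-th Hermite polynomial with real coefficients. -/
def hermiteReal (m : ℕ) : Polynomial ℝ := (Polynomial.hermite m).map (Int.castRingHom ℝ)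

theorem hermiteFun_eq_eval (m : ℕ) (x : ℝ) : hermiteFun m x = (hermiteReal m).eval x := by
  rw [hermiteFun, hermiteReal, Polynomial.eval_map, Polynomial.aeval_def]
  rfl

theorem hermiteReal_zero : hermiteReal 0 = 1 := by simp [hermiteReal]

theorem hermiteReal_succ (n : ℕ) : hermiteReal (n + 1) =
    Polynomial.X * hermiteReal n - Polynomial.derivative (hermiteReal n) := by
  simp [hermiteReal, Polynomial.hermite_succ, Polynomial.derivative_map]

theorem derivative_hermiteReal_succ (n : ℕ) :
    Polynomial.derivative (hermiteReal (n + 1)) =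
      ((n : Polynomial ℝ) + 1) * hermiteReal n := by
  rw [hermiteReal, Polynomial.derivative_map, derivative_hermite_succ]
  simp [hermiteReal]

theorem integrable_eval_gaussianReal (p : Polynomial ℝ) :
    Integrable (fun x => p.eval x) (gaussianReal 0 1) := by
  induction p using Polynomial.induction_on' with
  | add p q hp hq => exact (hp.add hq).congr (ae_of_all _ fun x => by simp)
  | monomial n a =>
    simp only [Polynomial.eval_monomial]
    refine Integrable.const_mul ?_ a
    have h := (memLp_id_gaussianReal (μ := 0) (v := 1) n).integrable_norm_pow'
    refine h.mono' (by fun_prop) (ae_of_all _ fun x => ?_)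
    simp

theorem memLp_two_eval_gaussianReal (p : Polynomial ℝ) :
    MemLp (fun x => p.eval x) 2 (gaussianReal 0 1) := by
  rw [memLp_two_iff_integrable_sq p.continuous.aestronglyMeasurable]
  exact (integrable_eval_gaussianReal (p ^ 2)).congr (ae_of_all _ fun x => by simp)

theorem hasDerivAt_gaussianPDFReal_standard (x : ℝ) :
    HasDerivAt (gaussianPDFReal 0 1) (-x * gaussianPDFReal 0 1 x) x := by
  have h : HasDerivAt (fun x : ℝ => (√(2 * Real.pi * (1 : ℝ≥0)))⁻¹ *
      Real.exp (-(x - 0) ^ 2 / (2 * (1 : ℝ≥0)))) _ x :=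
    (((((hasDerivAt_id x).sub_const 0).pow 2).neg.div_const (2 * ((1 : ℝ≥0) : ℝ))).exp).const_mul _
  rw [gaussianPDFReal_def]
  convert h using 1
  simp
  ring

/-- Gaussian integration by parts for polynomials. -/
theorem integral_mul_eval_gaussianReal (p : Polynomial ℝ) :
    ∫ x, x * p.eval x ∂(gaussianReal 0 1) =
      ∫ x, (Polynomial.derivative p).eval x ∂(gaussianReal 0 1) := by
  have hint (f : Polynomial ℝ) : Integrable (fun x => gaussianPDFReal 0 1 x * f.eval x) := by
    have h := integrable_eval_gaussianReal f
    rw [gaussianReal_of_var_ne_zero _ one_ne_zero,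
      integrable_withDensity_iff_integrable_smul' (measurable_gaussianPDF 0 1)
        (ae_of_all _ fun x => gaussianPDF_lt_top)] at h
    simpa [toReal_gaussianPDF] using h
  have h0 : ∫ x, (gaussianPDFReal 0 1 x * (Polynomial.derivative p).eval x -
      gaussianPDFReal 0 1 x * (Polynomial.X * p).eval x) = 0 := by
    refine integral_eq_zero_of_hasDerivAt_of_integrable
      (f := fun x => gaussianPDFReal 0 1 x * p.eval x) (fun x => ?_)
      ((hint _).sub (hint _)) (hint p)
    refine ((hasDerivAt_gaussianPDFReal_standard x).mul (p.hasDerivAt x)).congr_deriv ?_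
    simp
    ring
  rw [integral_sub (hint _) (hint _)] at h0
  simp only [integral_gaussianReal_eq_integral_smul one_ne_zero, smul_eq_mul]
  simp only [Polynomial.eval_mul, Polynomial.eval_X] at h0
  linarith

theorem integral_hermiteReal_succ_mul (n : ℕ) (g : Polynomial ℝ) :
    ∫ x, (hermiteReal (n + 1)).eval x * g.eval x ∂(gaussianReal 0 1) =
      ∫ x, (hermiteReal n).eval x * (Polynomial.derivative g).eval x ∂(gaussianReal 0 1) := by
  have h := integral_mul_eval_gaussianReal (hermiteReal n * g)
  have h1 (x : ℝ) : (hermiteReal (n + 1)).eval x * g.eval x =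
      (Polynomial.X * (hermiteReal n * g)).eval x -
        (Polynomial.derivative (hermiteReal n) * g).eval x := by
    simp [hermiteReal_succ]
    ring
  have h2 (x : ℝ) : (Polynomial.derivative (hermiteReal n * g)).eval x =
      (Polynomial.derivative (hermiteReal n) * g).eval x +
        (hermiteReal n * Polynomial.derivative g).eval x := by
    simp [Polynomial.derivative_mul]
  simp only [h2] at h
  rw [integral_add (integrable_eval_gaussianReal _) (integrable_eval_gaussianReal _)] at h
  simp only [h1]
  rw [integral_sub (integrable_eval_gaussianReal _) (integrable_eval_gaussianReal _)]
  simp only [Polynomial.eval_mul, Polynomial.eval_X] at h ⊢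
  linarith

theorem integral_hermiteReal_mul_hermiteReal (m n : ℕ) :
    ∫ x, (hermiteReal m).eval x * (hermiteReal n).eval x ∂(gaussianReal 0 1) =
      if m = n then (m.factorial : ℝ) else 0 := by
  induction m generalizing n with
  | zero =>
    cases n with
    | zero => simp [hermiteReal_zero]
    | succ n =>
      have h := integral_hermiteReal_succ_mul n 1
      simp only [Polynomial.eval_one, Polynomial.derivative_one, Polynomial.eval_zero, mul_one,
        mul_zero, integral_zero] at h
      simp [hermiteReal_zero, h]
  | succ m ih =>
    rw [integral_hermiteReal_succ_mul]
    cases n with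
    | zero => simp [hermiteReal_zero]
    | succ n =>
      have h (x : ℝ) : (hermiteReal m).eval x *
          (Polynomial.derivative (hermiteReal (n + 1))).eval x =
          ((n : ℝ) + 1) * ((hermiteReal m).eval x * (hermiteReal n).eval x) := by
        simp [derivative_hermiteReal_succ]
        ring
      simp only [h, integral_const_mul, ih]
      by_cases hmn : m = n
      · simp [hmn, Nat.factorial_succ]
      · simp [hmn]

/-- Hermite polynomials are eigenfunctions of the Mehler kernel. -/
theorem integral_hermiteReal_affine {ρ c : ℝ} (h : ρ ^ 2 + c ^ 2 = 1) (n : ℕ) (x : ℝ) :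
    ∫ w, (hermiteReal n).eval (ρ * x + c * w) ∂(gaussianReal 0 1) =
      ρ ^ n * (hermiteReal n).eval x := by
  have key (f : Polynomial ℝ) : Integrable (fun w => f.eval (ρ * x + c * w)) (gaussianReal 0 1) ∧
      ∫ w, w * f.eval (ρ * x + c * w) ∂(gaussianReal 0 1) =
        c * ∫ w, (Polynomial.derivative f).eval (ρ * x + c * w) ∂(gaussianReal 0 1) := by
    constructor
    · exact (integrable_eval_gaussianReal
        (f.comp (Polynomial.C (ρ * x) + Polynomial.C c * Polynomial.X))).congr
        (ae_of_all _ fun w => by simp)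
    · have := integral_mul_eval_gaussianReal
        (f.comp (Polynomial.C (ρ * x) + Polynomial.C c * Polynomial.X))
      simpa [Polynomial.derivative_comp, integral_const_mul] using this
  have hstep (f : Polynomial ℝ) :
      ∫ w, (Polynomial.X * f - Polynomial.derivative f).eval (ρ * x + c * w) ∂(gaussianReal 0 1) =
        ρ * x * ∫ w, f.eval (ρ * x + c * w) ∂(gaussianReal 0 1) -
        ρ ^ 2 * ∫ w, (Polynomial.derivative f).eval (ρ * x + c * w) ∂(gaussianReal 0 1) := by
    have e (w : ℝ) : (Polynomial.X * f - Polynomial.derivative f).eval (ρ * x + c * w) =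
        (ρ * x * f.eval (ρ * x + c * w) + c * (w * f.eval (ρ * x + c * w))) -
          (Polynomial.derivative f).eval (ρ * x + c * w) := by
      simp
      ring
    have hi : Integrable (fun w => w * f.eval (ρ * x + c * w)) (gaussianReal 0 1) := by
      exact (integrable_eval_gaussianReal
        (Polynomial.X * f.comp (Polynomial.C (ρ * x) + Polynomial.C c * Polynomial.X))).congr
        (ae_of_all _ fun w => by simp)
    simp only [e]
    have hf := (key f).1.const_mul (ρ * x)
    rw [integral_sub (by exact hf.add (hi.const_mul c)) (key _).1,
      integral_add ((key f).1.const_mul _) (hi.const_mul _), integral_const_mul,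
      integral_const_mul, (key f).2]
    linear_combination
      (∫ w, (Polynomial.derivative f).eval (ρ * x + c * w) ∂(gaussianReal 0 1)) * h
  induction n using Nat.strong_induction_on with
  | _ n ih =>
  rcases n with _ | _ | n
  · simp [hermiteReal_zero]
  · rw [hermiteReal_succ, hstep]
    simp [hermiteReal_zero]
  · rw [hermiteReal_succ, hstep, ih (n + 1) (by omega), derivative_hermiteReal_succ]
    have e (y : ℝ) : (((n : Polynomial ℝ) + 1) * hermiteReal n).eval y =
        ((n : ℝ) + 1) * (hermiteReal n).eval y := by simp
    simp only [e, Polynomial.eval_sub, Polynomial.eval_mul, Polynomial.eval_X, integral_const_mul,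
      ih n (by omega)]
    ring

theorem map_prod_gaussianReal_linear (a b : ℝ) :
    ((gaussianReal 0 1).prod (gaussianReal 0 1)).map (fun p : ℝ × ℝ => a * p.1 + b * p.2) =
      gaussianReal 0 (Real.toNNReal (a ^ 2 + b ^ 2)) := by
  have hlaw (f : ℝ × ℝ → ℝ) (hf : Measurable f)
      (h : ((gaussianReal 0 1).prod (gaussianReal 0 1)).map f = gaussianReal 0 1) (t : ℝ) :
      ((gaussianReal 0 1).prod (gaussianReal 0 1)).map (fun p => t * f p) =
        gaussianReal 0 (NNReal.mk (t ^ 2) (sq_nonneg t)) := by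
    have := gaussianReal_map_const_mul (μ := 0) (v := 1) t
    rw [← h, Measure.map_map (by fun_prop) hf] at this
    simpa [Function.comp_def] using this
  have h := gaussianReal_add_gaussianReal_of_indepFun
    (indepFun_prod (μ := gaussianReal 0 1) (ν := gaussianReal 0 1)
      (X := fun x => a * x) (Y := fun x => b * x) (by fun_prop) (by fun_prop))
    (hlaw Prod.fst measurable_fst (by simp) _)
    (hlaw Prod.snd measurable_snd (by simp) _)
  refine h.trans ?_
  congr 1
  · simp
  · exact NNReal.eq (by simp; positivity)

theorem memLp_two_of_map_eq_gaussianReal {Ω : Type*} [MeasurableSpace Ω] {P : Measure Ω}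
    {U : Ω → ℝ} (hU : Measurable U) {v : ℝ≥0} (h : P.map U = gaussianReal 0 v) :
    MemLp U 2 P := by
  have hm : MemLp id 2 (P.map U) := h ▸ memLp_id_gaussianReal' 2 (by simp)
  exact hm.comp_of_map hU.aemeasurable

theorem integral_mul_self_of_map_eq_gaussianReal {Ω : Type*} [MeasurableSpace Ω] {P : Measure Ω}
    {U : Ω → ℝ} (hU : Measurable U) {v : ℝ≥0} (h : P.map U = gaussianReal 0 v) :
    ∫ ω, U ω * U ω ∂P = v := by
  have hv := variance_fun_id_gaussianReal (μ := 0) (v := v)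
  rw [variance_eq_integral aemeasurable_id', integral_id_gaussianReal, ← h,
    integral_map hU.aemeasurable (by fun_prop)] at hv
  simpa [sq] using hv

/-- The law of a pair of standard jointly Gaussian variables with correlation `ρ`. -/
theorem map_prodMk_eq_of_gaussian {Ω : Type*} [MeasurableSpace Ω] {P : Measure Ω}
    [IsProbabilityMeasure P] {X Y : Ω → ℝ} (hX : Measurable X) (hY : Measurable Y)
    (hG : ∀ a b : ℝ, ∃ v : ℝ≥0, P.map (fun ω => a * X ω + b * Y ω) = gaussianReal 0 v)
    (hX2 : MemLp X 2 P) (hY2 : MemLp Y 2 P)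
    {ρ c : ℝ} (hc : ρ ^ 2 + c ^ 2 = 1) (hXX : ∫ ω, X ω * X ω ∂P = 1)
    (hYY : ∫ ω, Y ω * Y ω ∂P = 1) (hXY : ∫ ω, X ω * Y ω ∂P = ρ) :
    P.map (fun ω => (X ω, Y ω)) =
      ((gaussianReal 0 1).prod (gaussianReal 0 1)).map
        (fun p : ℝ × ℝ => (p.1, ρ * p.1 + c * p.2)) := by
  have : IsProbabilityMeasure (P.map fun ω => (X ω, Y ω)) :=
    Measure.isProbabilityMeasure_map (by fun_prop)
  have : IsProbabilityMeasure (((gaussianReal 0 1).prod (gaussianReal 0 1)).map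
        (fun p : ℝ × ℝ => (p.1, ρ * p.1 + c * p.2))) :=
    Measure.isProbabilityMeasure_map (by fun_prop)
  refine Measure.ext_of_charFunDual (funext fun L => ?_)
  rw [charFunDual_eq_charFun_map_one, charFunDual_eq_charFun_map_one]
  congr 1
  set a := L (1, 0)
  set b := L (0, 1)
  have hL (x y : ℝ) : L (x, y) = a * x + b * y := by
    have : (x, y) = x • ((1, 0) : ℝ × ℝ) + y • ((0, 1) : ℝ × ℝ) := by simp
    rw [this, map_add, map_smul, map_smul, smul_eq_mul, smul_eq_mul]
    ring
  rw [Measure.map_map (by fun_prop) (by fun_prop), Measure.map_map (by fun_prop) (by fun_prop)]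
  obtain ⟨v, hv⟩ := hG a b
  have e1 : L ∘ (fun ω => (X ω, Y ω)) = fun ω => a * X ω + b * Y ω := by
    ext ω; simp [hL]
  have e2 : L ∘ (fun p : ℝ × ℝ => (p.1, ρ * p.1 + c * p.2)) =
      fun p => (a + b * ρ) * p.1 + (b * c) * p.2 := by
    ext p
    simp [hL]
    ring
  have hv2 : (v : ℝ) = (a + b * ρ) ^ 2 + (b * c) ^ 2 := by
    rw [← integral_mul_self_of_map_eq_gaussianReal (by fun_prop) hv]
    have e (ω : Ω) : (a * X ω + b * Y ω) * (a * X ω + b * Y ω) =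
        a ^ 2 * (X ω * X ω) + 2 * a * b * (X ω * Y ω) + b ^ 2 * (Y ω * Y ω) := by ring
    have i1 := (hX2.integrable_mul hX2).const_mul (a ^ 2)
    have i2 := (hX2.integrable_mul hY2).const_mul (2 * a * b)
    have i3 := (hY2.integrable_mul hY2).const_mul (b ^ 2)
    simp only [e]
    rw [integral_add (by exact i1.add i2) (by exact i3), integral_add (by exact i1) (by exact i2),
      integral_const_mul, integral_const_mul, integral_const_mul, hXX, hYY, hXY]
    linear_combination -(b ^ 2) * hc
  rw [e1, e2, hv, map_prod_gaussianReal_linear, ← hv2, Real.toNNReal_coe]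

/-- Orthogonality of Hermite polynomials of correlated standard Gaussian variables. -/
theorem integral_hermiteReal_mul_of_gaussian {Ω : Type*} [MeasurableSpace Ω] {P : Measure Ω}
    {X Y : Ω → ℝ} (hX : Measurable X) (hY : Measurable Y)
    {ρ c : ℝ} (hc : ρ ^ 2 + c ^ 2 = 1)
    (h : P.map (fun ω => (X ω, Y ω)) = ((gaussianReal 0 1).prod (gaussianReal 0 1)).map
        (fun p : ℝ × ℝ => (p.1, ρ * p.1 + c * p.2))) (m n : ℕ) :
    ∫ ω, (hermiteReal m).eval (X ω) * (hermiteReal n).eval (Y ω) ∂P =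
      if m = n then (m.factorial : ℝ) * ρ ^ m else 0 := by
  have hcont : Continuous fun p : ℝ × ℝ =>
      (hermiteReal m).eval p.1 * (hermiteReal n).eval p.2 :=
    ((hermiteReal m).continuous.comp continuous_fst).mul
      ((hermiteReal n).continuous.comp continuous_snd)
  have h1 := integral_map (μ := P) (hX.prodMk hY).aemeasurable hcont.aestronglyMeasurable
  rw [h, integral_map (by fun_prop) hcont.aestronglyMeasurable] at h1
  rw [← h1]
  have i1 : MemLp (fun p : ℝ × ℝ => (hermiteReal m).eval p.1) 2
      ((gaussianReal 0 1).prod (gaussianReal 0 1)) :=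
    (memLp_two_eval_gaussianReal (hermiteReal m)).comp_measurePreserving measurePreserving_fst
  have i2 : MemLp (fun p : ℝ × ℝ => (hermiteReal n).eval (ρ * p.1 + c * p.2)) 2
      ((gaussianReal 0 1).prod (gaussianReal 0 1)) :=
    (memLp_two_eval_gaussianReal (hermiteReal n)).comp_measurePreserving
      ⟨by fun_prop, by rw [map_prod_gaussianReal_linear, hc, Real.toNNReal_one]⟩
  rw [integral_prod _ (by exact i1.integrable_mul i2)]
  simp only [integral_const_mul, integral_hermiteReal_affine hc]
  have e (x : ℝ) : (hermiteReal m).eval x * (ρ ^ n * (hermiteReal n).eval x) =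
      ρ ^ n * ((hermiteReal m).eval x * (hermiteReal n).eval x) := by ring
  simp only [e, integral_const_mul, integral_hermiteReal_mul_hermiteReal]
  split_ifs with hmn
  · rw [hmn]; ring
  · simp

namespace IsCSG

variable {Z : ℤ → Ω → ℝ} {r : ℤ → ℝ}

theorem exists_map_standardized_eq (hZ : IsCSG Z r) (i j : ℤ) (a b : ℝ) : ∃ v : ℝ≥0,
    Measure.map (fun ω => a * (Z i ω / √(r 0)) + b * (Z j ω / √(r 0))) (ℙ : Measure Ω) =
      gaussianReal 0 v := by
  by_cases hij : i = j
  · subst hij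
    obtain ⟨v, hv⟩ := hZ.2.1 {i} (fun _ => (a + b) / √(r 0))
    refine ⟨v, hv ▸ ?_⟩
    congr 1
    ext ω
    simp
    ring
  · obtain ⟨v, hv⟩ := hZ.2.1 {i, j} (fun k => if k = i then a / √(r 0) else b / √(r 0))
    refine ⟨v, hv ▸ ?_⟩
    congr 1
    ext ω
    rw [Finset.sum_pair hij, if_pos rfl, if_neg (Ne.symm hij)]
    ring

theorem measurable_standardized (hZ : IsCSG Z r) (i : ℤ) :
    Measurable fun ω => Z i ω / √(r 0) := (hZ.1 i).div_const _

theorem integral_standardized_mul (hZ : IsCSG Z r) (i j : ℤ) :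
    ∫ ω, (Z i ω / √(r 0)) * (Z j ω / √(r 0)) = r (j - i) / r 0 := by
  have e (ω : Ω) : (Z i ω / √(r 0)) * (Z j ω / √(r 0)) = (Z i ω * Z j ω) / r 0 := by
    rw [div_mul_div_comm, Real.mul_self_sqrt hZ.2.2.2.le]
  simp only [e, integral_div, hZ.2.2.1]

theorem integral_standardized_mul_self (hZ : IsCSG Z r) (i : ℤ) :
    ∫ ω, (Z i ω / √(r 0)) * (Z i ω / √(r 0)) = 1 := by
  rw [hZ.integral_standardized_mul, sub_self, div_self hZ.2.2.2.ne']

theorem map_standardized (hZ : IsCSG Z r) (i : ℤ) :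
    Measure.map (fun ω => Z i ω / √(r 0)) (ℙ : Measure Ω) = gaussianReal 0 1 := by
  obtain ⟨v, hv⟩ := hZ.exists_map_standardized_eq i i 1 0
  simp only [one_mul, zero_mul, add_zero] at hv
  have h := integral_mul_self_of_map_eq_gaussianReal (hZ.measurable_standardized i) hv
  rw [hZ.integral_standardized_mul_self] at h
  rw [hv, NNReal.eq (n := v) (m := 1) (by simpa using h.symm)]

theorem memLp_standardized (hZ : IsCSG Z r) (i : ℤ) :
    MemLp (fun ω => Z i ω / √(r 0)) 2 (ℙ : Measure Ω) :=
  memLp_two_of_map_eq_gaussianReal (hZ.measurable_standardized i) (hZ.map_standardized i)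

theorem sq_correlation_le_one (hZ : IsCSG Z r) (h : ℤ) : (r h / r 0) ^ 2 ≤ 1 := by
  set ρ := r h / r 0 with hρ
  have hXY := hZ.integral_standardized_mul 0 h
  rw [sub_zero, ← hρ] at hXY
  have hXX := hZ.integral_standardized_mul_self 0
  have hYY := hZ.integral_standardized_mul_self h
  have hX2 := hZ.memLp_standardized 0
  have hY2 := hZ.memLp_standardized h
  set X := fun ω => Z 0 ω / √(r 0)
  set Y := fun ω => Z h ω / √(r 0)
  have h0 : 0 ≤ ∫ ω, (X ω - ρ * Y ω) ^ 2 := integral_nonneg fun ω => sq_nonneg _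
  have e (ω : Ω) : (X ω - ρ * Y ω) ^ 2 =
      X ω * X ω - 2 * ρ * (X ω * Y ω) + ρ ^ 2 * (Y ω * Y ω) := by ring
  have i1 := hX2.integrable_mul hX2
  have i2 := (hX2.integrable_mul hY2).const_mul (2 * ρ)
  have i3 := (hY2.integrable_mul hY2).const_mul (ρ ^ 2)
  simp only [e] at h0
  rw [integral_add (by exact i1.sub i2) (by exact i3), integral_sub (by exact i1) (by exact i2),
    integral_const_mul, integral_const_mul, hXX, hYY, hXY] at h0
  linarith

theorem memLp_hermiteFun (hZ : IsCSG Z r) (m : ℕ) (i : ℤ) :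
    MemLp (fun ω => hermiteFun m (Z i ω / √(r 0))) 2 (ℙ : Measure Ω) := by
  simp only [hermiteFun_eq_eval]
  exact (memLp_two_eval_gaussianReal (hermiteReal m)).comp_measurePreserving
    ⟨hZ.measurable_standardized i, hZ.map_standardized i⟩

theorem integral_hermiteFun_mul [IsProbabilityMeasure (ℙ : Measure Ω)] (hZ : IsCSG Z r)
    (m n : ℕ) (i j : ℤ) :
    ∫ ω, hermiteFun m (Z i ω / √(r 0)) * hermiteFun n (Z j ω / √(r 0)) =
      if m = n then (m.factorial : ℝ) * (r (j - i) / r 0) ^ m else 0 := by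
  have hc : (r (j - i) / r 0) ^ 2 + (√(1 - (r (j - i) / r 0) ^ 2)) ^ 2 = 1 := by
    rw [Real.sq_sqrt (sub_nonneg.2 (hZ.sq_correlation_le_one _))]
    ring
  simp only [hermiteFun_eq_eval]
  exact integral_hermiteReal_mul_of_gaussian (hZ.measurable_standardized i)
    (hZ.measurable_standardized j) hc
    (map_prodMk_eq_of_gaussian (hZ.measurable_standardized i) (hZ.measurable_standardized j)
      (hZ.exists_map_standardized_eq i j) (hZ.memLp_standardized i) (hZ.memLp_standardized j) hc
      (hZ.integral_standardized_mul_self i) (hZ.integral_standardized_mul_self j)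
      (hZ.integral_standardized_mul i j)) m n

theorem integral_hermiteFun [IsProbabilityMeasure (ℙ : Measure Ω)] (hZ : IsCSG Z r)
    {m : ℕ} (hm : m ≠ 0) (i : ℤ) :
    ∫ ω, hermiteFun m (Z i ω / √(r 0)) = 0 := by
  have h := hZ.integral_hermiteFun_mul m 0 i i
  simpa [hm, hermiteFun] using h

theorem lamE_fpoly [IsProbabilityMeasure (ℙ : Measure Ω)] (hZ : IsCSG Z r) (d : ℕ → ℝ) (q : ℕ) :
    lamE (fpoly (r 0) d q) Z = d 0 := by
  simp only [lamE, fpoly]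
  rw [integral_finsetSum _ fun k _ =>
    ((hZ.memLp_hermiteFun (2 * k) 0).integrable one_le_two).const_mul _]
  simp only [integral_const_mul]
  rw [Finset.sum_eq_single 0]
  · simp [hermiteFun]
  · intro k _ hk
    rw [hZ.integral_hermiteFun (by omega), mul_zero]
  · simp

theorem fpoly_sub_lamE [IsProbabilityMeasure (ℙ : Measure Ω)] (hZ : IsCSG Z r) (d : ℕ → ℝ)
    (q : ℕ) (x : ℝ) : fpoly (r 0) d q x - lamE (fpoly (r 0) d q) Z =
      ∑ k ∈ Finset.Icc 1 (q / 2), d (2 * k) * hermiteFun (2 * k) (x / √(r 0)) := by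
  rw [hZ.lamE_fpoly, fpoly, Finset.range_eq_Ico, Finset.sum_eq_sum_Ico_succ_bot (by omega)]
  simp [hermiteFun]
  rfl

theorem memLp_fpoly_sub_lamE [IsProbabilityMeasure (ℙ : Measure Ω)] (hZ : IsCSG Z r)
    (d : ℕ → ℝ) (q : ℕ) (i : ℤ) :
    MemLp (fun ω => fpoly (r 0) d q (Z i ω) - lamE (fpoly (r 0) d q) Z) 2 (ℙ : Measure Ω) := by
  simp only [hZ.fpoly_sub_lamE]
  exact memLp_finsetSum _ fun k _ => (hZ.memLp_hermiteFun (2 * k) i).const_mul _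

theorem integral_fpoly_sub_mul [IsProbabilityMeasure (ℙ : Measure Ω)] (hZ : IsCSG Z r)
    (d : ℕ → ℝ) (q : ℕ) (i j : ℤ) :
    ∫ ω, (fpoly (r 0) d q (Z i ω) - lamE (fpoly (r 0) d q) Z) *
        (fpoly (r 0) d q (Z j ω) - lamE (fpoly (r 0) d q) Z) =
      ∑ k ∈ Finset.Icc 1 (q / 2),
        (d (2 * k)) ^ 2 * (Nat.factorial (2 * k)) * (r (j - i) / r 0) ^ (2 * k) := by
  have hi (k l : ℕ) : Integrable (fun ω => d (2 * k) * hermiteFun (2 * k) (Z i ω / √(r 0)) *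
      (d (2 * l) * hermiteFun (2 * l) (Z j ω / √(r 0)))) (ℙ : Measure Ω) :=
    ((hZ.memLp_hermiteFun (2 * k) i).const_mul _).integrable_mul
      ((hZ.memLp_hermiteFun (2 * l) j).const_mul _)
  simp only [hZ.fpoly_sub_lamE, Finset.sum_mul_sum]
  rw [integral_finsetSum _ fun k _ => integrable_finsetSum _ fun l _ => hi k l]
  refine Finset.sum_congr rfl fun k hk => ?_
  rw [integral_finsetSum _ fun l _ => hi k l]
  have e (l : ℕ) : ∫ ω, d (2 * k) * hermiteFun (2 * k) (Z i ω / √(r 0)) *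
      (d (2 * l) * hermiteFun (2 * l) (Z j ω / √(r 0))) =
      d (2 * k) * d (2 * l) *
        if 2 * k = 2 * l then (Nat.factorial (2 * k) : ℝ) * (r (j - i) / r 0) ^ (2 * k) else 0 := by
    rw [← hZ.integral_hermiteFun_mul, ← integral_const_mul]
    congr 1
    ext ω
    ring
  simp only [e]
  rw [Finset.sum_eq_single_of_mem k hk]
  · simp
    ring
  · intro l _ hl
    rw [if_neg (by omega), mul_zero]

theorem varU_fpoly [IsProbabilityMeasure (ℙ : Measure Ω)] (hZ : IsCSG Z r)
    (d : ℕ → ℝ) (q n : ℕ) :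
    varU (fpoly (r 0) d q) Z n =
      (n : ℝ)⁻¹ * ∑ i ∈ Finset.range n, ∑ j ∈ Finset.range n, ∑ k ∈ Finset.Icc 1 (q / 2),
        (d (2 * k)) ^ 2 * (Nat.factorial (2 * k)) * (r ((j : ℤ) - i) / r 0) ^ (2 * k) := by
  rcases Nat.eq_zero_or_pos n with rfl | hn
  · simp [varU, Ustat]
  have hn' : (n : ℝ) ≠ 0 := by positivity
  set g : ℤ → Ω → ℝ := fun i ω => fpoly (r 0) d q (Z i ω) - lamE (fpoly (r 0) d q) Z with hg
  have e (ω : Ω) : Ustat (fpoly (r 0) d q) Z n ω ^ 2 =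
      (n : ℝ)⁻¹ * ∑ i ∈ Finset.range n, ∑ j ∈ Finset.range n, g i ω * g j ω := by
    rw [← Finset.sum_mul_sum, Ustat, Qvar, mul_pow, Real.sq_sqrt (Nat.cast_nonneg n)]
    simp only [hg, Finset.sum_sub_distrib, Finset.sum_const, Finset.card_range, nsmul_eq_mul]
    field_simp
  have hi (i j : ℤ) : Integrable (fun ω => g i ω * g j ω) (ℙ : Measure Ω) :=
    (hZ.memLp_fpoly_sub_lamE d q i).integrable_mul (hZ.memLp_fpoly_sub_lamE d q j)
  simp only [varU, e]
  rw [integral_const_mul, integral_finsetSum _ fun (i : ℕ) _ =>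
    integrable_finsetSum _ fun (j : ℕ) _ => hi i j]
  congr 1
  refine Finset.sum_congr rfl fun i _ => ?_
  rw [integral_finsetSum _ fun (j : ℕ) _ => hi i j]
  exact Finset.sum_congr rfl fun j _ => hZ.integral_fpoly_sub_mul d q i j

theorem summable_correlation_pow (hZ : IsCSG Z r) (hsum : Summable fun j : ℤ => (r j) ^ 2)
    {k : ℕ} (hk : 1 ≤ k) : Summable fun j : ℤ => (r j / r 0) ^ (2 * k) := by
  have h2 : Summable fun j : ℤ => (r j / r 0) ^ 2 := by
    simpa [div_pow] using hsum.div_const (r 0 ^ 2)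
  refine h2.of_nonneg_of_le (fun j => ?_) fun j => ?_
  · rw [pow_mul]
    positivity
  · rw [pow_mul]
    exact pow_le_of_le_one (sq_nonneg _) (hZ.sq_correlation_le_one j) (by omega)

end IsCSG

theorem sum_range_sum_range_sub (g : ℤ → ℝ) (n : ℕ) :
    ∑ i ∈ Finset.range n, ∑ j ∈ Finset.range n, g ((j : ℤ) - i) =
      ∑ m ∈ Finset.range n, (∑ i ∈ Finset.range (m + 1), (g i + g (-i)) - g 0) := by
  induction n with
  | zero => simp
  | succ n ih =>
    rw [Finset.sum_range_succ,
      Finset.sum_range_succ (fun m => ∑ i ∈ Finset.range (m + 1), (g i + g (-i)) - g 0) n, ← ih]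
    simp only [Finset.sum_range_succ _ n, Finset.sum_add_distrib]
    have h1 : ∑ i ∈ Finset.range n, g ((n : ℤ) - i) + g 0 =
        ∑ i ∈ Finset.range n, g i + g n := by
      rw [← Finset.sum_range_succ (fun i : ℕ => g i), Finset.sum_range_succ',
        ← Finset.sum_range_reflect]
      congr 1
      refine Finset.sum_congr rfl fun i hi => ?_
      have := Finset.mem_range.1 hi
      congr 1
      omega
    have h2 : ∑ i ∈ Finset.range n, g ((i : ℤ) - n) + g 0 =
        ∑ i ∈ Finset.range n, g (-i) + g (-n) := by
      rw [← Finset.sum_range_succ (fun i : ℕ => g (-i)), Finset.sum_range_succ',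
        ← Finset.sum_range_reflect]
      congr 1
      refine Finset.sum_congr rfl fun i hi => ?_
      have := Finset.mem_range.1 hi
      congr 1
      omega
    rw [sub_self]
    linarith

/-- Averages of a summable function of the difference over squares converge to its sum. -/
theorem HasSum.tendsto_inv_mul_sum_sub {g : ℤ → ℝ} {s : ℝ} (hg : HasSum g s) :
    Tendsto (fun n : ℕ => (n : ℝ)⁻¹ *
      ∑ i ∈ Finset.range n, ∑ j ∈ Finset.range n, g ((j : ℤ) - i)) atTop (nhds s) := by
  simp only [sum_range_sum_range_sub]
  refine Tendsto.cesaro ?_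
  have h := ((tendsto_add_atTop_iff_nat 1).2 hg.nat_add_neg.tendsto_sum_nat).sub_const (g 0)
  simpa using h

/-- under `∑_{j∈ℤ} r(j)² < ∞`, the series defining `u_{f_q}(Z)`
converge and `E[U_{f_q,n}(Z)²] → u_{f_q}(Z)`. -/
theorem statement_1
    {Ω : Type*} [MeasureSpace Ω] [IsProbabilityMeasure (ℙ : Measure Ω)]
    (Z : ℤ → Ω → ℝ) (r : ℤ → ℝ) (hZ : IsCSG Z r)
    (q : ℕ) (hq : 0 < q) (hqe : q % 2 = 0)
    (d : ℕ → ℝ) (hd : d q = r 0 ^ (q / 2))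
    (hsum : Summable fun j : ℤ => (r j) ^ 2) :
    (∀ k ∈ Finset.Icc 1 (q / 2), Summable fun j : ℤ => (r j / r 0) ^ (2 * k)) ∧
      Filter.Tendsto (fun n : ℕ => varU (fpoly (r 0) d q) Z n) Filter.atTop
        (nhds (ufq r d q)) := by
  refine ⟨fun k hk => hZ.summable_correlation_pow hsum (Finset.mem_Icc.1 hk).1, ?_⟩
  simp only [hZ.varU_fpoly]
  have h : HasSum (fun j : ℤ => ∑ k ∈ Finset.Icc 1 (q / 2),
      (d (2 * k)) ^ 2 * (Nat.factorial (2 * k)) * (r j / r 0) ^ (2 * k)) (ufq r d q) :=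
    hasSum_sum fun k hk =>
      (hZ.summable_correlation_pow hsum (Finset.mem_Icc.1 hk).1).hasSum.mul_left _
  exact h.tendsto_inv_mul_sum_sub

end
end

section
/- There exists a constant C > 0 such that for every n ≥ 1, κ₄(F_{f₂,n}(Z)) ≤ C · (Σ_{|j|<n} |r(j)|^{4/3})³ / ( n · (E[U_{f₂,n}(Z)²])² ). -/
open MeasureTheory ProbabilityTheory Filter
open scoped NNReal ENNReal

noncomputable section

variable {Ω : Type*} [MeasureSpace Ω]

/-- Absolute moments of order at most four are finite for a random variable in `L⁴`. -/
lemma integrable_pow_of_memLp_four [IsFiniteMeasure (ℙ : Measure Ω)] {X : Ω → ℝ}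
    (hX : MemLp X 4 (ℙ : Measure Ω)) {k : ℕ} (hk : k ≤ 4) :
    Integrable (fun ω => X ω ^ k) (ℙ : Measure Ω) := by
  have h : MemLp X (k : ℝ≥0∞) (ℙ : Measure Ω) :=
    hX.mono_exponent (by exact_mod_cast hk)
  refine (h.integrable_norm_pow').mono' (hX.aestronglyMeasurable.pow k) ?_
  exact Eventually.of_forall fun ω => by simp

/-- Recursion for the moments of a centered real Gaussian law. -/
lemma integral_pow_add_two_gaussianReal (v : ℝ≥0) (n : ℕ) :
    ∫ x, x ^ (n + 2) ∂gaussianReal 0 v = (n + 1) * v * ∫ x, x ^ n ∂gaussianReal 0 v := by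
  set M := mgf (fun x : ℝ => x) (gaussianReal 0 v) with hM
  have hd (n : ℕ) (t : ℝ) : HasDerivAt (iteratedDeriv n M) (iteratedDeriv (n + 1) M t) t := by
    have h := hasDerivAt_iteratedDeriv_mgf (X := fun x : ℝ => x) (μ := gaussianReal 0 v)
      (t := t) (by simp) n
    rwa [← iteratedDeriv_mgf (by simp)] at h
  have h1 : iteratedDeriv 1 M = fun t => v * t * iteratedDeriv 0 M t := by
    funext t
    rw [iteratedDeriv_one, iteratedDeriv_zero, hM, mgf_fun_id_gaussianReal]
    have : HasDerivAt (fun t : ℝ => Real.exp (0 * t + v * t ^ 2 / 2))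
        (Real.exp (0 * t + v * t ^ 2 / 2) * (0 * 1 + v * (2 * t ^ 1 * 1) / 2)) t :=
      HasDerivAt.exp ((hasDerivAt_id' t).const_mul 0 |>.add
        ((((hasDerivAt_id' t).pow 2).const_mul (v : ℝ)).div_const 2))
    rw [this.deriv]
    ring
  have key (n : ℕ) : iteratedDeriv (n + 2) M =
      fun t => v * t * iteratedDeriv (n + 1) M t + (n + 1) * v * iteratedDeriv n M t := by
    induction n with
    | zero =>
      funext t
      rw [iteratedDeriv_succ (n := 1), zero_add]
      conv_lhs => rw [h1]
      rw [(((hasDerivAt_id' t).const_mul (v : ℝ)).fun_mul (hd 0 t)).deriv]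
      push_cast
      ring
    | succ n ih =>
      funext t
      rw [iteratedDeriv_succ (n := n + 2)]
      conv_lhs => rw [ih]
      rw [((((hasDerivAt_id' t).const_mul (v : ℝ)).fun_mul (hd (n + 1) t)).fun_add
        ((hd n t).const_mul _)).deriv]
      push_cast
      ring
  have h0 (n : ℕ) : iteratedDeriv n M 0 = ∫ x, x ^ n ∂gaussianReal 0 v := by
    rw [hM, iteratedDeriv_mgf_zero (by simp)]
    rfl
  rw [← h0, ← h0, key]
  simp

/-- The first moments of the centered square of a centered Gaussian variable. -/
lemma moments_sq_sub_of_map_eq_gaussianReal {Y : Ω → ℝ} {v : ℝ≥0}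
    (hY : AEMeasurable Y (ℙ : Measure Ω))
    (h : (ℙ : Measure Ω).map Y = gaussianReal 0 v) :
    ∫ ω, (Y ω ^ 2 - v) = 0 ∧ ∫ ω, (Y ω ^ 2 - v) ^ 2 = 2 * (v : ℝ) ^ 2 ∧
      ∫ ω, (Y ω ^ 2 - v) ^ 4 = 60 * (v : ℝ) ^ 4 := by
  have hmap (g : ℝ → ℝ) (hg : Continuous g) : ∫ ω, g (Y ω) = ∫ x, g x ∂gaussianReal 0 v := by
    rw [← h, integral_map hY hg.aestronglyMeasurable]
  have hint (k : ℕ) : Integrable (fun x : ℝ => x ^ k) (gaussianReal 0 v) := by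
    have := (memLp_id_gaussianReal' (μ := 0) (v := v) (k : ℝ≥0∞) (by simp)).integrable_norm_pow'
    exact this.mono' (by fun_prop) (Eventually.of_forall fun x => by simp)
  have m0 : ∫ x, x ^ 0 ∂gaussianReal 0 v = 1 := by simp
  have m2 := integral_pow_add_two_gaussianReal v 0
  have m4 := integral_pow_add_two_gaussianReal v 2
  have m6 := integral_pow_add_two_gaussianReal v 4
  have m8 := integral_pow_add_two_gaussianReal v 6
  norm_num at m2 m4 m6 m8
  refine ⟨?_, ?_, ?_⟩
  · rw [hmap (fun x => x ^ 2 - v) (by fun_prop), integral_sub (hint 2) (integrable_const _), m2]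
    simp
  · rw [hmap (fun x => (x ^ 2 - v) ^ 2) (by fun_prop)]
    have (x : ℝ) : (x ^ 2 - (v : ℝ)) ^ 2 = x ^ 4 - 2 * v * x ^ 2 + v ^ 2 * x ^ 0 := by ring
    simp_rw [this]
    rw [integral_add (by fun_prop (disch := exact hint _)) (by fun_prop),
      integral_sub (hint 4) ((hint 2).const_mul _)]
    simp only [integral_const_mul, m0, m2, m4]
    ring
  · rw [hmap (fun x => (x ^ 2 - v) ^ 4) (by fun_prop)]
    have (x : ℝ) : (x ^ 2 - (v : ℝ)) ^ 4 = x ^ 8 - 4 * v * x ^ 6 + 6 * v ^ 2 * x ^ 4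
        - 4 * v ^ 3 * x ^ 2 + v ^ 4 * x ^ 0 := by ring
    simp_rw [this]
    have i8 := hint 8
    have i6 := (hint 6).const_mul (4 * (v : ℝ))
    have i4 := (hint 4).const_mul (6 * (v : ℝ) ^ 2)
    have i2 := (hint 2).const_mul (4 * (v : ℝ) ^ 3)
    have i0 := (hint 0).const_mul ((v : ℝ) ^ 4)
    rw [integral_add (by fun_prop) i0, integral_sub (by fun_prop) i2,
      integral_add (by fun_prop) i4, integral_sub i8 i6]
    simp only [integral_const_mul, m0, m2, m4, m6, m8]
    ring

/-- The fourth cumulant is additive on independent centered variables. -/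
lemma kappa4_add_of_indepFun [IsProbabilityMeasure (ℙ : Measure Ω)] {X Y : Ω → ℝ}
    (hX : MemLp X 4 (ℙ : Measure Ω)) (hY : MemLp Y 4 (ℙ : Measure Ω))
    (hXY : IndepFun X Y (ℙ : Measure Ω)) (hX0 : ∫ ω, X ω = 0) (hY0 : ∫ ω, Y ω = 0) :
    kappa4 (X + Y) = kappa4 X + kappa4 Y := by
  have ind (k l : ℕ) : IndepFun (fun ω => X ω ^ k) (fun ω => Y ω ^ l) (ℙ : Measure Ω) :=
    hXY.comp (φ := fun x => x ^ k) (ψ := fun x => x ^ l) (by fun_prop) (by fun_prop)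
  have int {k l : ℕ} (hk : k ≤ 4) (hl : l ≤ 4) :
      Integrable (fun ω => X ω ^ k * Y ω ^ l) (ℙ : Measure Ω) :=
    (ind k l).integrable_mul (integrable_pow_of_memLp_four hX hk)
      (integrable_pow_of_memLp_four hY hl)
  have mul (k l : ℕ) : ∫ ω, X ω ^ k * Y ω ^ l = (∫ ω, X ω ^ k) * ∫ ω, Y ω ^ l :=
    (ind k l).integral_fun_mul_eq_mul_integral (hX.aestronglyMeasurable.pow k)
      (hY.aestronglyMeasurable.pow l)
  have e2 : ∫ ω, (X + Y) ω ^ 2 = (∫ ω, X ω ^ 2) + ∫ ω, Y ω ^ 2 := by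
    have (ω : Ω) : (X + Y) ω ^ 2
        = X ω ^ 2 * Y ω ^ 0 + 2 * (X ω ^ 1 * Y ω ^ 1) + X ω ^ 0 * Y ω ^ 2 := by
      simp only [Pi.add_apply]; ring
    simp_rw [this]
    have i20 := int (k := 2) (l := 0) (by norm_num) (by norm_num)
    have i11 := (int (k := 1) (l := 1) (by norm_num) (by norm_num)).const_mul 2
    have i02 := int (k := 0) (l := 2) (by norm_num) (by norm_num)
    rw [integral_add (i20.fun_add i11) i02, integral_add i20 i11]
    simp only [integral_const_mul, mul]
    simp [hX0]
  have e4 : ∫ ω, (X + Y) ω ^ 4 =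
      (∫ ω, X ω ^ 4) + 6 * ((∫ ω, X ω ^ 2) * ∫ ω, Y ω ^ 2) + ∫ ω, Y ω ^ 4 := by
    have (ω : Ω) : (X + Y) ω ^ 4 = X ω ^ 4 * Y ω ^ 0 + 4 * (X ω ^ 3 * Y ω ^ 1)
        + 6 * (X ω ^ 2 * Y ω ^ 2) + 4 * (X ω ^ 1 * Y ω ^ 3) + X ω ^ 0 * Y ω ^ 4 := by
      simp only [Pi.add_apply]; ring
    simp_rw [this]
    have i40 := int (k := 4) (l := 0) (by norm_num) (by norm_num)
    have i31 := (int (k := 3) (l := 1) (by norm_num) (by norm_num)).const_mul 4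
    have i22 := (int (k := 2) (l := 2) (by norm_num) (by norm_num)).const_mul 6
    have i13 := (int (k := 1) (l := 3) (by norm_num) (by norm_num)).const_mul 4
    have i04 := int (k := 0) (l := 4) (by norm_num) (by norm_num)
    rw [integral_add (((i40.fun_add i31).fun_add i22).fun_add i13) i04,
      integral_add ((i40.fun_add i31).fun_add i22) i13, integral_add (i40.fun_add i31) i22,
      integral_add i40 i31]
    simp only [integral_const_mul, mul]
    simp [hX0, hY0]
  rw [kappa4, kappa4, kappa4, e2, e4]
  ring

lemma kappa4_sum_of_iIndepFun [IsProbabilityMeasure (ℙ : Measure Ω)] {ι : Type*}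
    {W : ι → Ω → ℝ} (hW : ∀ i, MemLp (W i) 4 (ℙ : Measure Ω))
    (hind : iIndepFun W (ℙ : Measure Ω)) (h0 : ∀ i, ∫ ω, W i ω = 0) (s : Finset ι) :
    kappa4 (∑ i ∈ s, W i) = ∑ i ∈ s, kappa4 (W i) := by
  classical
  induction s using Finset.induction_on with
  | empty => simp [kappa4]
  | insert i s hi ih =>
    rw [Finset.sum_insert hi, Finset.sum_insert hi, add_comm, kappa4_add_of_indepFun
      (memLp_finsetSum' s fun j _ => hW j) (hW i)
      (hind.indepFun_finsetSum_of_notMem₀ (fun j => (hW j).aemeasurable) hi) ?_ (h0 i), ih, add_comm]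
    simp only [Finset.sum_apply]
    rw [integral_finsetSum _ fun j _ => (hW j).integrable (by norm_num)]
    simp [h0]

lemma kappa4_const_mul (c : ℝ) (X : Ω → ℝ) :
    kappa4 (fun ω => c * X ω) = c ^ 4 * kappa4 X := by
  simp only [kappa4, mul_pow, integral_const_mul]
  ring

/-- A Young-type bound for the trace of the fourth power of a symmetric matrix, in terms of
the `ℓ^{4/3}` norms of its rows. -/
lemma trace_pow_four_le {ι : Type*} [Fintype ι] [DecidableEq ι] {A : Matrix ι ι ℝ}
    (hA : A.IsSymm) {S : ℝ} (hS : ∀ i, ∑ j, |A i j| ^ ((4 : ℝ) / 3) ≤ S) :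
    (A ^ 4).trace ≤ Fintype.card ι * S ^ 3 := by
  set b : ι → ι → ℝ := fun i j => |A i j| ^ ((2 : ℝ) / 3) with hb
  have hb0 (i j : ι) : 0 ≤ b i j := by positivity
  have hb2 (i j : ι) : |A i j| ^ ((4 : ℝ) / 3) = b i j ^ 2 := by
    rw [hb, ← Real.rpow_natCast, ← Real.rpow_mul (abs_nonneg _)]
    norm_num
  have hb3 (i j : ι) : A i j ^ 2 = b i j ^ 3 := by
    rw [← sq_abs, hb, ← Real.rpow_natCast (_ ^ _), ← Real.rpow_mul (abs_nonneg _),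
      ← Real.rpow_natCast]
    norm_num
  have hbs (i j : ι) : b i j = b j i := by simp only [hb, hA.apply i j]
  simp_rw [hb2] at hS
  have hS0 (i : ι) : 0 ≤ S := (Finset.sum_nonneg fun j _ => sq_nonneg (b i j)).trans (hS i)
  have entry (i k : ι) : ((A ^ 2) i k) ^ 2 ≤ (∑ j, b i j ^ 2 * b j k ^ 2) * S := by
    rw [sq A, Matrix.mul_apply]
    refine (Finset.sum_sq_le_sum_mul_sum_of_sq_le_mul Finset.univ
      (f := fun j => b i j ^ 2 * b j k ^ 2) (g := fun j => b i j * b j k)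
      (fun j _ => by positivity) (fun j _ => mul_nonneg (hb0 _ _) (hb0 _ _)) fun j _ => le_of_eq ?_).trans ?_
    · rw [mul_pow, hb3, hb3]
      ring
    · refine mul_le_mul_of_nonneg_left ?_ (Finset.sum_nonneg fun j _ => by positivity)
      calc ∑ j, b i j * b j k ≤ ∑ j, (b i j ^ 2 + b k j ^ 2) / 2 := by
            refine Finset.sum_le_sum fun j _ => ?_
            rw [hbs j k]
            nlinarith [sq_nonneg (b i j - b k j)]
        _ = ((∑ j, b i j ^ 2) + ∑ j, b k j ^ 2) / 2 := by
            rw [← Finset.sum_add_distrib, Finset.sum_div]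
        _ ≤ S := by linarith [hS i, hS k]
  have row (i : ι) : ∑ k, ∑ j, b i j ^ 2 * b j k ^ 2 ≤ S ^ 2 := by
    rw [Finset.sum_comm]
    simp_rw [← Finset.mul_sum]
    calc ∑ j, b i j ^ 2 * ∑ k, b j k ^ 2 ≤ ∑ j, b i j ^ 2 * S :=
          Finset.sum_le_sum fun j _ => mul_le_mul_of_nonneg_left (hS j) (sq_nonneg _)
      _ = (∑ j, b i j ^ 2) * S := by rw [Finset.sum_mul]
      _ ≤ S ^ 2 := by
          rw [sq]
          exact mul_le_mul_of_nonneg_right (hS i) (hS0 i)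
  calc (A ^ 4).trace = ∑ i, ∑ k, ((A ^ 2) i k) ^ 2 := by
        rw [show (4 : ℕ) = 2 + 2 from rfl, pow_add, Matrix.trace]
        refine Finset.sum_congr rfl fun i _ => ?_
        rw [Matrix.diag_apply, Matrix.mul_apply]
        refine Finset.sum_congr rfl fun k _ => ?_
        rw [(hA.pow 2).apply i k, ← sq]
    _ ≤ ∑ i, ∑ k, (∑ j, b i j ^ 2 * b j k ^ 2) * S :=
        Finset.sum_le_sum fun i _ => Finset.sum_le_sum fun k _ => entry i k
    _ = ∑ i, (∑ k, ∑ j, b i j ^ 2 * b j k ^ 2) * S := by simp_rw [Finset.sum_mul]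
    _ ≤ ∑ _i : ι, S ^ 2 * S :=
        Finset.sum_le_sum fun i _ => mul_le_mul_of_nonneg_right (row i) (hS0 i)
    _ = Fintype.card ι * S ^ 3 := by
        rw [Finset.sum_const, Finset.card_univ, nsmul_eq_mul]
        ring

/-- The fourth cumulant of the centered squared norm of a centered Gaussian vector is
`48` times the trace of the fourth power of its covariance matrix. -/
lemma kappa4_sum_sq_sub_trace_of_hasGaussianLaw [IsProbabilityMeasure (ℙ : Measure Ω)]
    {ι : Type*} [Fintype ι] [DecidableEq ι] {X : ι → Ω → ℝ}
    (hX : HasGaussianLaw (fun ω i => X i ω) (ℙ : Measure Ω)) (h0 : ∀ i, ∫ ω, X i ω = 0)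
    {A : Matrix ι ι ℝ} (hA : ∀ i j, ∫ ω, X i ω * X j ω = A i j) :
    kappa4 (fun ω => (∑ i, X i ω ^ 2) - A.trace) = 48 * (A ^ 4).trace := by
  have hH : A.IsHermitian := by
    ext i j
    simp only [Matrix.conjTranspose_apply, star_trivial, ← hA, mul_comm]
  set l := hH.eigenvalues with hl
  set U : Matrix ι ι ℝ := hH.eigenvectorUnitary.1 with hU
  have hUU : U * U.transpose = 1 := by
    simpa [Matrix.star_eq_conjTranspose] using Unitary.coe_mul_star_self hH.eigenvectorUnitary
  have hUU' : U.transpose * U = 1 := by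
    simpa [Matrix.star_eq_conjTranspose] using Unitary.coe_star_mul_self hH.eigenvectorUnitary
  have hD : U.transpose * A * U = Matrix.diagonal l := by
    have := hH.conjStarAlgAut_star_eigenvectorUnitary
    rw [Unitary.conjStarAlgAut_star_apply] at this
    simpa [Matrix.star_eq_conjTranspose, Function.comp_def] using this
  have hAD : A = U * Matrix.diagonal l * U.transpose := by
    rw [← hD]
    simp only [Matrix.mul_assoc, hUU, Matrix.mul_one]
    rw [← Matrix.mul_assoc, hUU, Matrix.one_mul]
  have hA4 : A ^ 4 = U * Matrix.diagonal l ^ 4 * U.transpose := by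
    have (k : ℕ) : A ^ k = U * Matrix.diagonal l ^ k * U.transpose := by
      induction k with
      | zero => simp [hUU]
      | succ k ih =>
        rw [pow_succ, ih, pow_succ]
        conv_lhs => rw [hAD]
        simp only [Matrix.mul_assoc]
        rw [← Matrix.mul_assoc U.transpose U, hUU', Matrix.one_mul]
    exact this 4
  have htr : A.trace = ∑ i, l i := by
    rw [hAD, Matrix.trace_mul_comm, ← Matrix.mul_assoc, hUU', Matrix.one_mul,
      Matrix.trace_diagonal]
  have htr4 : (A ^ 4).trace = ∑ i, l i ^ 4 := by
    rw [hA4, Matrix.trace_mul_comm, ← Matrix.mul_assoc, hUU', Matrix.one_mul,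
      Matrix.diagonal_pow, Matrix.trace_diagonal]
    rfl
  set Y : ι → Ω → ℝ := fun i ω => ∑ j, U j i * X j ω with hYdef
  have hYG : HasGaussianLaw (fun ω i => Y i ω) (ℙ : Measure Ω) := by
    have := hX.map_fun (Matrix.mulVecLin U.transpose).toContinuousLinearMap
    convert! this using 2
  have hXi (i : ι) := (hX.eval i).integrable
  have hY0 (i : ι) : ∫ ω, Y i ω = 0 := by
    simp only [hYdef]
    rw [integral_finsetSum _ fun j _ => (hXi j).const_mul _]
    simp [integral_const_mul, h0]
  have hYY (i k : ι) : ∫ ω, Y i ω * Y k ω = Matrix.diagonal l i k := by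
    have hint (a b : ι) : Integrable (fun ω => U a i * U b k * (X a ω * X b ω)) (ℙ : Measure Ω) :=
      ((hX.eval a).memLp_two.integrable_mul (hX.eval b).memLp_two).const_mul _
    have (ω : Ω) : Y i ω * Y k ω = ∑ a, ∑ b, U a i * U b k * (X a ω * X b ω) := by
      simp only [hYdef, Finset.sum_mul_sum]
      exact Finset.sum_congr rfl fun a _ => Finset.sum_congr rfl fun b _ => by ring
    simp_rw [this]
    rw [integral_finsetSum _ fun a _ => integrable_finsetSum _ fun b _ => hint a b]
    simp_rw [integral_finsetSum _ fun b _ => hint _ b, integral_const_mul, hA]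
    rw [← hD, Matrix.mul_apply, Finset.sum_comm]
    refine Finset.sum_congr rfl fun b _ => ?_
    rw [Matrix.mul_apply, Finset.sum_mul]
    refine Finset.sum_congr rfl fun a _ => ?_
    rw [Matrix.transpose_apply]
    ring
  have hind : iIndepFun Y (ℙ : Measure Ω) := by
    refine hYG.iIndepFun_of_covariance_eq_zero fun i j hij => ?_
    rw [covariance_eq_sub (hYG.eval i).memLp_two (hYG.eval j).memLp_two, hY0, hY0]
    simpa [hij] using hYY i j
  have hl0 (i : ι) : 0 ≤ l i := by
    have := hYY i i
    rw [Matrix.diagonal_apply_eq] at this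
    exact this ▸ integral_nonneg fun ω => mul_self_nonneg _
  have hmap (i : ι) : (ℙ : Measure Ω).map (Y i) = gaussianReal 0 (l i).toNNReal := by
    rw [(hYG.eval i).map_eq_gaussianReal, hY0,
      variance_of_integral_eq_zero (hYG.eval i).aemeasurable (hY0 i)]
    have := hYY i i
    rw [Matrix.diagonal_apply_eq] at this
    simp_rw [sq, this]
  set W : ι → Ω → ℝ := fun i ω => Y i ω ^ 2 - l i with hW
  have hWm (i : ι) := moments_sq_sub_of_map_eq_gaussianReal (hYG.eval i).aemeasurable (hmap i)
  simp only [Real.coe_toNNReal _ (hl0 _)] at hWm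
  have hWL (i : ι) : MemLp (W i) 4 (ℙ : Measure Ω) := by
    refine MemLp.sub ?_ (memLp_const _)
    have h8 := (hYG.eval i).memLp (p := 8) (by simp)
    have : MemLp (Y i * Y i) 4 (ℙ : Measure Ω) := by
      have : ENNReal.HolderTriple 8 8 4 := ⟨by
        rw [← ENNReal.toReal_eq_toReal_iff' (by simp) (by simp)]
        rw [ENNReal.toReal_add (by simp) (by simp)]
        norm_num⟩
      exact MemLp.mul h8 h8
    simp only [sq]
    exact this
  have hWind : iIndepFun W (ℙ : Measure Ω) :=
    hind.comp (fun i x => x ^ 2 - l i) fun i => by fun_prop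
  have hsum : (fun ω => (∑ i, X i ω ^ 2) - A.trace) = ∑ i, W i := by
    funext ω
    simp only [Finset.sum_apply, hW, Finset.sum_sub_distrib, htr]
    congr 1
    have hYv : (fun i => Y i ω) = U.transpose.mulVec fun j => X j ω := rfl
    have e1 : ∑ i, X i ω ^ 2 = (fun i => X i ω) ⬝ᵥ fun i => X i ω := by
      simp [dotProduct, sq]
    have e2 : ∑ i, Y i ω ^ 2 = (fun i => Y i ω) ⬝ᵥ fun i => Y i ω := by
      simp [dotProduct, sq]
    rw [e1, e2, hYv, Matrix.dotProduct_mulVec, Matrix.vecMul_transpose, Matrix.mulVec_mulVec, hUU,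
      Matrix.one_mulVec]
  rw [hsum, kappa4_sum_of_iIndepFun hWL hWind (fun i => (hWm i).1), htr4, Finset.mul_sum]
  refine Finset.sum_congr rfl fun i _ => ?_
  rw [kappa4, (hWm i).2.1, (hWm i).2.2]
  ring

lemma IsCSG.integral_eq_zero {Z : ℤ → Ω → ℝ} {r : ℤ → ℝ} (hZ : IsCSG Z r) (k : ℤ) :
    ∫ ω, Z k ω = 0 := by
  obtain ⟨v, hv⟩ := hZ.2.1 {k} 1
  simp only [Finset.sum_singleton, Pi.one_apply, one_mul] at hv
  have := integral_map (μ := (ℙ : Measure Ω)) (φ := Z k) (hZ.1 k).aemeasurable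
    (f := fun x : ℝ => x) (by fun_prop)
  rw [← this, hv, integral_id_gaussianReal]

/-- The first `n` terms of a Gaussian sequence form a Gaussian vector. -/
lemma IsCSG.hasGaussianLaw {Z : ℤ → Ω → ℝ} {r : ℤ → ℝ} (hZ : IsCSG Z r) (n : ℕ) :
    HasGaussianLaw (fun ω (i : Fin n) => Z (i : ℤ) ω) (ℙ : Measure Ω) where
  isGaussian_map := by
    have hm : Measurable fun ω (i : Fin n) => Z (i : ℤ) ω := measurable_pi_lambda _ fun i => hZ.1 _
    refine isGaussian_of_map_eq_gaussianReal fun L => ⟨0, ?_⟩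
    obtain ⟨v, hv⟩ := hZ.2.1 ((Finset.range n).map Nat.castEmbedding)
      fun k => if h : k.toNat < n then L (Pi.single ⟨k.toNat, h⟩ 1) else 0
    refine ⟨v, ?_⟩
    rw [Measure.map_map (by fun_prop) hm, ← hv]
    congr 1
    funext ω
    rw [Finset.sum_map, Finset.sum_range, Function.comp_apply]
    conv_lhs => rw [← Finset.univ_sum_single fun i : Fin n => Z (i : ℤ) ω, map_sum]
    refine Finset.sum_congr rfl fun i _ => ?_
    have : Pi.single i (Z (i : ℤ) ω) = Z (i : ℤ) ω • (Pi.single i 1 : Fin n → ℝ) := by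
      rw [← Pi.single_smul, smul_eq_mul, mul_one]
    rw [this, map_smul, smul_eq_mul, mul_comm]
    simp

lemma sum_fin_sub_le_sum_Ioo {f : ℤ → ℝ} (hf : ∀ j, 0 ≤ f j) {n : ℕ} (i : Fin n) :
    ∑ j : Fin n, f (j - i) ≤ ∑ j ∈ Finset.Ioo (-(n : ℤ)) n, f j := by
  have hinj : Function.Injective fun j : Fin n => ((j : ℤ) - (i : ℤ)) := fun a b h => by
    simp only at h
    omega
  rw [← Finset.sum_image (f := f) (g := fun j : Fin n => ((j : ℤ) - (i : ℤ))) hinj.injOn]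
  refine Finset.sum_le_sum_of_subset_of_nonneg ?_ fun j _ _ => hf j
  intro k hk
  simp only [Finset.mem_image, Finset.mem_univ, true_and] at hk
  obtain ⟨j, rfl⟩ := hk
  rw [Finset.mem_Ioo]
  omega

/-- quantitative bound on the fourth cumulant of the standardized
quadratic variation. -/
theorem statement_3
    {Ω : Type*} [MeasureSpace Ω] [IsProbabilityMeasure (ℙ : Measure Ω)]
    (Z : ℤ → Ω → ℝ) (r : ℤ → ℝ) (hZ : IsCSG Z r) :
    ∃ C > (0 : ℝ), ∀ n : ℕ, 1 ≤ n →
      kappa4 (F2stat Z (r 0) n) ≤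
        C * (∑ j ∈ Finset.Ioo (-(n : ℤ)) (n : ℤ), |r j| ^ ((4 : ℝ) / 3)) ^ 3 /
          ((n : ℝ) * (varU2 Z (r 0) n) ^ 2) := by
  refine ⟨48, by norm_num, fun n hn => ?_⟩
  have hn0 : (0 : ℝ) < n := by exact_mod_cast hn
  set S := ∑ j ∈ Finset.Ioo (-(n : ℤ)) (n : ℤ), |r j| ^ ((4 : ℝ) / 3) with hS
  let A : Matrix (Fin n) (Fin n) ℝ := Matrix.of fun i j => r (j - i)
  have hA (i j : Fin n) : ∫ ω, Z i ω * Z j ω = A i j := hZ.2.2.1 i j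
  have hsymm : A.IsSymm := by
    ext i j
    rw [Matrix.transpose_apply, ← hA, ← hA]
    simp_rw [mul_comm]
  have htrace : A.trace = n * r 0 := by simp [A, Matrix.trace]
  have hκ := kappa4_sum_sq_sub_trace_of_hasGaussianLaw (hZ.hasGaussianLaw n)
    (fun i => hZ.integral_eq_zero i) hA
  have hle : (A ^ 4).trace ≤ n * S ^ 3 := by
    simpa using trace_pow_four_le hsymm fun i =>
      sum_fin_sub_le_sum_Ioo (f := fun j => |r j| ^ ((4 : ℝ) / 3)) (fun j => by positivity) i
  have hU : F2stat Z (r 0) n = fun ω => (√n / n / √(varU2 Z (r 0) n)) *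
      ((∑ i : Fin n, Z i ω ^ 2) - A.trace) := by
    funext ω
    rw [F2stat, U2, Qvar, htrace, Finset.sum_range]
    simp only [f2]
    field_simp
  have hv : 0 ≤ varU2 Z (r 0) n := integral_nonneg fun ω => sq_nonneg _
  have hc : (√n / n / √(varU2 Z (r 0) n)) ^ 4 = 1 / (n ^ 2 * varU2 Z (r 0) n ^ 2) := by
    have h4 (x : ℝ) (hx : 0 ≤ x) : √x ^ 4 = x ^ 2 := by
      rw [show (4 : ℕ) = 2 * 2 from rfl, pow_mul, Real.sq_sqrt hx]
    rw [div_pow, div_pow, h4 _ hn0.le, h4 _ hv]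
    field_simp
  rw [hU, kappa4_const_mul, hκ, hc]
  calc 1 / (n ^ 2 * varU2 Z (r 0) n ^ 2) * (48 * (A ^ 4).trace)
      ≤ 1 / (n ^ 2 * varU2 Z (r 0) n ^ 2) * (48 * (n * S ^ 3)) := by gcongr
    _ = 48 * S ^ 3 / (n * varU2 Z (r 0) n ^ 2) := by
        field_simp

end
end
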